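/- arXiv:1907.00272 — 4 statements merged into one kernel-verified Lean document; each statement's English description precedes it below -/
import Mathlib

section
/- Let G be a finite connected graph with a clique NC-path-tree model ({P_v}, T), where T has at least one edge. Then the edge set of T admits a unique partition into parts each of which induces a connected subtree T' of T of one of the following two types: (1) T' consists of the three edges incident to a junction x, i.e., T' is the star formed by x together with its three neighbors, all of which are terminals; (2) T' is a path whose two end nodes are terminals and each of whose internal nodes (if any) has degree two in T and is mixed. -/
/-!
Every node of the host tree is a terminal, a mixed node of degree two, or a junction of degree
three whose neighbours are terminals (`classify`). The argument is local. Each edge of the tree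
lies on some path because `G` is connected; no bag contains another because the bags are distinct
maximal cliques; and non-crossing means that if one path runs through `a - x - b`, every path
through `x` contains `a` or `b`. If a nonterminal node `x` has at least three neighbours, these
facts produce paths through `a - x - b`, `a - x - c` and `b - x - c`, so `x` has no further
neighbour, no path ends at `x`, and no path can continue beyond `a`, `b` or `c`. If `x` has two
neighbours, some path misses one of them and hence ends at `x`, so `x` is mixed.

For uniqueness, link two edges when they share a nonterminal node. An admissible part (a star or
a path) is closed under links (`part_closed`) and linked within itself, so two admissible parts
with a common edge coincide (`part_eq_part`). Consequently a partition into admissible parts can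
only be the family of all admissible parts. That family is a partition as soon as it covers the
edges (`exists_part`): an edge at a junction lies in its star, and any other edge lies in a longest
path whose internal nodes are mixed of degree two; the ends of such a path are terminals, since
otherwise the path could be prolonged.
-/

open SimpleGraph

/-- A set `S` of nodes of a host graph `H` induces a path in `H`:
there is an enumeration of `S` such that two nodes of `S` are adjacent
in `H` iff they are consecutive in the enumeration. -/
def InducesPath {β : Type*} (H : SimpleGraph β) (S : Set β) : Prop :=
  ∃ (n : ℕ) (f : Fin (n + 1) → β), Function.Injective f ∧ Set.range f = S ∧
    ∀ i j : Fin (n + 1), H.Adj (f i) (f j) ↔ (i.val + 1 = j.val ∨ j.val + 1 = i.val)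

/-- Two node sets are non-crossing in a host graph `H`: each set difference
induces a connected (possibly empty) subgraph of `H`. -/
def NonCrossing {β : Type*} (H : SimpleGraph β) (S S' : Set β) : Prop :=
  (H.induce (S \ S')).Preconnected ∧ (H.induce (S' \ S)).Preconnected

/-- The claw `K_{1,3}`: vertex `0` adjacent to `1`, `2`, `3`, which are pairwise nonadjacent. -/
def claw : SimpleGraph (Fin 4) := SimpleGraph.fromRel (fun a b => a = 0 ∨ b = 0)

/-- A graph is claw-free when it has no induced subgraph isomorphic to `K_{1,3}`. -/
def ClawFree {V : Type*} (G : SimpleGraph V) : Prop := ¬ Nonempty (claw ↪g G)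

/-- A graph is chordal when it has no induced cycle of length at least four. -/
def Chordal {V : Type*} (G : SimpleGraph V) : Prop :=
  ∀ n : ℕ, 4 ≤ n → ¬ Nonempty (cycleGraph n ↪g G)

/-- The 3-sun: triangle `0,1,2` and pairwise nonadjacent vertices `3,4,5` with
`3 ~ 0,1`; `4 ~ 1,2`; `5 ~ 2,0`. -/
def threeSun : SimpleGraph (Fin 6) := SimpleGraph.fromRel (fun a b =>
  (a = 0 ∧ b = 1) ∨ (a = 0 ∧ b = 2) ∨ (a = 1 ∧ b = 2) ∨
  (a = 3 ∧ b = 0) ∨ (a = 3 ∧ b = 1) ∨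
  (a = 4 ∧ b = 1) ∨ (a = 4 ∧ b = 2) ∨
  (a = 5 ∧ b = 2) ∨ (a = 5 ∧ b = 0))

/-- The net: triangle `0,1,2` with pendant vertices `3 ~ 0`, `4 ~ 1`, `5 ~ 2`. -/
def net : SimpleGraph (Fin 6) := SimpleGraph.fromRel (fun a b =>
  (a = 0 ∧ b = 1) ∨ (a = 0 ∧ b = 2) ∨ (a = 1 ∧ b = 2) ∨
  (a = 3 ∧ b = 0) ∨ (a = 4 ∧ b = 1) ∨ (a = 5 ∧ b = 2))

/-- `s` is a maximal clique of `G`. -/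
def IsMaxClique {V : Type*} (G : SimpleGraph V) (s : Set V) : Prop :=
  G.IsClique s ∧ ∀ t : Set V, G.IsClique t → s ⊆ t → s = t

/-- `x` is an endpoint of the set `S` (inducing a path in `T`): `x ∈ S` and
`x` has at most one neighbour inside `S`. -/
def IsPathEnd {β : Type*} (T : SimpleGraph β) (S : Set β) (x : β) : Prop :=
  x ∈ S ∧ {y ∈ S | T.Adj x y}.Subsingleton

/-- `x` is a terminal of the model `P` in `T`: it is an endpoint of every path containing it. -/
def IsTerminal {V β : Type*} (T : SimpleGraph β) (P : V → Set β) (x : β) : Prop :=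
  ∀ v : V, x ∈ P v → IsPathEnd T (P v) x

/-- `x` is a junction of the model `P` in `T`: it is an internal (non-endpoint) node of
every path containing it. -/
def IsJunction {V β : Type*} (T : SimpleGraph β) (P : V → Set β) (x : β) : Prop :=
  ∀ v : V, x ∈ P v → ¬ IsPathEnd T (P v) x

/-- `x` is mixed: neither a terminal nor a junction. -/
def IsMixed {V β : Type*} (T : SimpleGraph β) (P : V → Set β) (x : β) : Prop :=
  ¬ IsTerminal T P x ∧ ¬ IsJunction T P x

/-- In the tree `T` rooted at `r`, `a` is an ancestor of `b`:
`a` lies on the unique path from `b` to `r`. -/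
def Ancestor {β : Type*} (T : SimpleGraph β) (r a b : β) : Prop :=
  ∀ w : T.Walk b r, w.IsPath → a ∈ w.support

/-- `S` is a dominating set of `G`. -/
def IsDom {V : Type*} (G : SimpleGraph V) (S : Set V) : Prop :=
  ∀ v : V, v ∈ S ∨ ∃ u ∈ S, G.Adj u v

/-- `S` is a connected dominating set of `G` (nonempty with connected induced subgraph). -/
def IsConnDom {V : Type*} (G : SimpleGraph V) (S : Set V) : Prop :=
  IsDom G S ∧ (G.induce S).Connected

/-- Two vertices are twins when they have the same closed neighbourhood. -/
def Twins {V : Type*} (G : SimpleGraph V) (u v : V) : Prop :=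
  insert u (G.neighborSet u) = insert v (G.neighborSet v)

/-- A path `z 0, …, z (k-1)` in `T` (with `k ≥ 3` nodes) whose two end nodes are terminals
and whose inner nodes all have degree two in `T`. -/
def TerminalPath {V β : Type*} (T : SimpleGraph β) (P : V → Set β) (k : ℕ) (z : ℕ → β) : Prop :=
  3 ≤ k ∧ (∀ i j, i < k → j < k → z i = z j → i = j) ∧
  (∀ i, i + 1 < k → T.Adj (z i) (z (i + 1))) ∧
  IsTerminal T P (z 0) ∧ IsTerminal T P (z (k - 1)) ∧
  ∀ i, 0 < i → i + 1 < k → (T.neighborSet (z i)).ncard = 2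

/-- Edge part of type (1): the three edges incident to a junction `x`,
whose three neighbours are all terminals. -/
def StarPart {V β : Type*} (T : SimpleGraph β) (P : V → Set β) (p : Set (Sym2 β)) : Prop :=
  ∃ x : β, IsJunction T P x ∧ (T.neighborSet x).ncard = 3 ∧
    (∀ y ∈ T.neighborSet x, IsTerminal T P y) ∧
    p = {e | e ∈ T.edgeSet ∧ x ∈ e}

/-- Edge part of type (2): the edges of a path `z 0, …, z k` in `T` whose two end nodes
are terminals and each of whose internal nodes has degree two in `T` and is mixed. -/
def PathPart {V β : Type*} (T : SimpleGraph β) (P : V → Set β) (p : Set (Sym2 β)) : Prop :=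
  ∃ (k : ℕ) (z : ℕ → β), 1 ≤ k ∧
    (∀ i j, i ≤ k → j ≤ k → z i = z j → i = j) ∧
    (∀ i, i < k → T.Adj (z i) (z (i + 1))) ∧
    IsTerminal T P (z 0) ∧ IsTerminal T P (z k) ∧
    (∀ i, 0 < i → i < k → (T.neighborSet (z i)).ncard = 2 ∧ IsMixed T P (z i)) ∧
    p = {e | ∃ i, i < k ∧ e = s(z i, z (i + 1))}

/-- `v` is a cut-vertex of `G`: deleting `v` leaves a disconnected graph. -/
def IsCutVertex {V : Type*} (G : SimpleGraph V) (v : V) : Prop :=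
  ¬ (G.induce {u | u ≠ v}).Preconnected

/-- `B` is (the vertex set of) a block of `G`: a maximal connected subgraph
having no cut-vertex of its own. -/
def IsBlock {V : Type*} (G : SimpleGraph V) (B : Set V) : Prop :=
  (G.induce B).Connected ∧ (∀ v ∈ B, (G.induce (B \ {v})).Preconnected) ∧
  ∀ B' : Set V, B ⊆ B' → (G.induce B').Connected →
    (∀ v ∈ B', (G.induce (B' \ {v})).Preconnected) → B = B'

/-- The node type of the block-cutpoint tree: cut-vertices and blocks of `G`. -/
def BCVert {V : Type*} (G : SimpleGraph V) : Type _ :=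
  {v : V // IsCutVertex G v} ⊕ {B : Set V // IsBlock G B}

/-- The block-cutpoint tree of `G`: a cut-vertex `c` is joined to a block `B`
exactly when `c ∈ B`. -/
def bcGraph {V : Type*} (G : SimpleGraph V) : SimpleGraph (BCVert G) :=
  SimpleGraph.fromRel (fun a b =>
    ∃ (c : {v : V // IsCutVertex G v}) (B : {B : Set V // IsBlock G B}),
      a = Sum.inl c ∧ b = Sum.inr B ∧ (c : V) ∈ (B : Set V))

/-! ### Local axioms of a clique NC-path-tree model -/

/-- The consequences of being a clique NC-path-tree model which drive the local analysis at a node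
of the host tree. -/
structure LocalModel {V β : Type*} (T : SimpleGraph β) (P : V → Set β) : Prop where
  /-- A node of a path has at most two neighbours on it. -/
  deg_two : ∀ v x a b c, x ∈ P v → a ∈ P v → b ∈ P v → c ∈ P v →
    T.Adj x a → T.Adj x b → T.Adj x c → a = b ∨ a = c ∨ b = c
  /-- Every edge of the tree is used by some path (connectivity of the graph). -/
  edge : ∀ x y, T.Adj x y → ∃ v, x ∈ P v ∧ y ∈ P v
  /-- The bag of a node is not contained in the bag of another (maximality of the cliques). -/
  not_incl : ∀ x y, x ≠ y → ∃ v, x ∈ P v ∧ y ∉ P v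
  /-- If one path runs through `a - x - b`, then any path through `x` contains `a` or `b`. -/
  sep : ∀ u v a x b, T.Adj x a → T.Adj x b → a ≠ b → a ∈ P u → b ∈ P u → x ∈ P v →
    a ∈ P v ∨ b ∈ P v
  /-- If one path runs through `a - x - y - b`, then any path through `x` contains `a` or `b`. -/
  sep' : ∀ u v a x y b, T.Adj x a → T.Adj x y → T.Adj y b → a ≠ y → x ≠ b →
    a ∈ P u → b ∈ P u → x ∈ P v → a ∈ P v ∨ b ∈ P v

/-- In an acyclic graph, a preconnected set of nodes contains every node of the path joining two
of its members. -/
lemma mem_of_preconnected {β : Type*} {T : SimpleGraph β} (hT : T.IsAcyclic) {S : Set β}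
    (hS : (T.induce S).Preconnected) {a b x : β} (ha : a ∈ S) (hb : b ∈ S)
    (p : T.Walk a b) (hp : p.IsPath) (hx : x ∈ p.support) : x ∈ S := by
  classical
  obtain ⟨q⟩ := hS ⟨a, ha⟩ ⟨b, hb⟩
  let q' : T.Walk a b := q.map (Embedding.induce S).toHom
  have h := (hT.subsingleton_path a b).elim ⟨p, hp⟩ ⟨q'.bypass, q'.bypass_isPath⟩
  have h' : p = q'.bypass := congrArg Subtype.val h
  rw [h'] at hx
  have hx' : x ∈ (q.map (Embedding.induce S).toHom).support :=
    q'.support_bypass_subset_support hx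
  rw [Walk.support_map] at hx'
  obtain ⟨y, -, rfl⟩ := List.mem_map.1 hx'
  exact y.2

/-- A clique of a finite graph extends to a maximal clique. -/
lemma exists_isMaxClique {V : Type*} [Finite V] (G : SimpleGraph V) {s : Set V}
    (hs : G.IsClique s) : ∃ t, s ⊆ t ∧ IsMaxClique G t := by
  obtain ⟨t, hst, ht⟩ := Finite.exists_le_maximal (p := fun t : Set V => G.IsClique t) hs
  exact ⟨t, hst, ht.1, fun r hr htr => Set.Subset.antisymm htr (ht.2 hr htr)⟩

lemma IsMaxClique.nonempty {V : Type*} [Nonempty V] {G : SimpleGraph V} {s : Set V}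
    (hs : IsMaxClique G s) : s.Nonempty := by
  by_contra h
  rw [Set.not_nonempty_iff_eq_empty] at h
  obtain ⟨v⟩ := ‹Nonempty V›
  have := hs.2 {v} (by simp) (by simp [h])
  rw [h] at this
  exact (Set.singleton_ne_empty v) this.symm

lemma InducesPath.deg_two {β : Type*} {T : SimpleGraph β} {S : Set β} (h : InducesPath T S)
    {x a b c : β} (hx : x ∈ S) (ha : a ∈ S) (hb : b ∈ S) (hc : c ∈ S)
    (hxa : T.Adj x a) (hxb : T.Adj x b) (hxc : T.Adj x c) : a = b ∨ a = c ∨ b = c := by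
  obtain ⟨n, f, -, rfl, hadj⟩ := h
  obtain ⟨i, rfl⟩ := hx
  obtain ⟨j, rfl⟩ := ha
  obtain ⟨k, rfl⟩ := hb
  obtain ⟨l, rfl⟩ := hc
  rw [hadj] at hxa hxb hxc
  have : j = k ∨ j = l ∨ k = l := by
    simp only [Fin.ext_iff]; omega
  rcases this with h | h | h <;> simp [h]

/-- If an edge `xy` of the tree were not used by any path, then deleting it would
split the paths, and hence the connected graph `G`, into two sides. -/
lemma exists_path_of_adj {V β : Type*} [Finite V] (G : SimpleGraph V) (hconn : G.Connected)
    (T : SimpleGraph β) (hT : T.IsTree)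
    (C : β → Set V) (hCmax : ∀ x : β, IsMaxClique G (C x))
    (hCsurj : ∀ s : Set V, IsMaxClique G s → ∃ x : β, C x = s)
    (P : V → Set β) (hP : ∀ (v : V) (x : β), x ∈ P v ↔ v ∈ C x)
    (hpath : ∀ v : V, InducesPath T (P v)) {x y : β} (hxy : T.Adj x y) :
    ∃ v, x ∈ P v ∧ y ∈ P v := by
  by_contra! hno
  have : Nonempty V := hconn.nonempty
  set T' := T.deleteEdges {s(x, y)} with hT'
  have hnr : ¬ T'.Reachable x y := by
    have := isAcyclic_iff_forall_adj_isBridge.1 hT.isAcyclic hxy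
    rwa [isBridge_iff] at this
  -- each path lies on one side of the deleted edge
  have hside : ∀ v a b, a ∈ P v → b ∈ P v → T'.Reachable a b := by
    intro v a b ha hb
    obtain ⟨n, f, -, hr, hadj⟩ := hpath v
    have key : ∀ m (hm : m < n + 1), T'.Reachable (f 0) (f ⟨m, hm⟩) := by
      intro m
      induction m with
      | zero => intro hm; exact Reachable.refl _
      | succ m ih =>
        intro hm
        refine (ih (by omega)).trans (Adj.reachable ?_)
        have h1 : f ⟨m, by omega⟩ ∈ P v := hr ▸ Set.mem_range_self _
        have h2 : f ⟨m + 1, hm⟩ ∈ P v := hr ▸ Set.mem_range_self _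
        rw [hT', deleteEdges_adj]
        refine ⟨(hadj _ _).2 (Or.inl rfl), ?_⟩
        rw [Set.mem_singleton_iff, Sym2.eq_iff]
        rintro (⟨e1, e2⟩ | ⟨e1, e2⟩)
        · exact hno v (e1 ▸ h1) (e2 ▸ h2)
        · exact hno v (e2 ▸ h2) (e1 ▸ h1)
    rw [← hr] at ha hb
    obtain ⟨i, rfl⟩ := ha
    obtain ⟨j, rfl⟩ := hb
    exact (key i i.2).symm.trans (key j j.2)
  have hprop : ∀ u v, G.Reachable u v → ∀ a ∈ P u, ∀ b ∈ P v, T'.Reachable a b := by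
    rintro u v ⟨w⟩
    induction w with
    | nil => intro a ha b hb; exact hside _ a b ha hb
    | @cons u v w h _ ih =>
      intro a ha b hb
      obtain ⟨t, hst, ht⟩ := exists_isMaxClique G (s := {u, v}) (by
        rw [isClique_pair]; exact fun _ => h)
      obtain ⟨z, rfl⟩ := hCsurj t ht
      have hzu : z ∈ P u := (hP u z).2 (hst (by simp))
      have hzv : z ∈ P v := (hP v z).2 (hst (by simp))
      exact (hside u a z ha hzu).trans (ih z hzv b hb)
  obtain ⟨u, hu⟩ := (hCmax x).nonempty
  obtain ⟨v, hv⟩ := (hCmax y).nonempty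
  exact hnr (hprop u v (hconn.preconnected u v) x ((hP _ _).2 hu) y ((hP _ _).2 hv))

lemma localModel {V β : Type*} [Finite V] (G : SimpleGraph V) (hconn : G.Connected)
    (T : SimpleGraph β) (hT : T.IsTree)
    (C : β → Set V) (hCinj : Function.Injective C)
    (hCmax : ∀ x : β, IsMaxClique G (C x))
    (hCsurj : ∀ s : Set V, IsMaxClique G s → ∃ x : β, C x = s)
    (P : V → Set β) (hP : ∀ (v : V) (x : β), x ∈ P v ↔ v ∈ C x)
    (hpath : ∀ v : V, InducesPath T (P v))
    (hnc : ∀ u v : V, u ≠ v → NonCrossing T (P u) (P v)) : LocalModel T P := by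
  have hsep : ∀ u v a b x (p : T.Walk a b), p.IsPath → x ∈ p.support →
      a ∈ P u → b ∈ P u → x ∈ P v → a ∈ P v ∨ b ∈ P v := by
    intro u v a b x p hp hx ha hb hxv
    by_contra! hab
    have huv : u ≠ v := by rintro rfl; exact hab.1 ha
    exact (mem_of_preconnected hT.isAcyclic (hnc u v huv).1 ⟨ha, hab.1⟩ ⟨hb, hab.2⟩ p hp hx).2 hxv
  refine ⟨fun v x a b c hx ha hb hc => (hpath v).deg_two hx ha hb hc,
    fun x y hxy => exists_path_of_adj G hconn T hT C hCmax hCsurj P hP hpath hxy, ?_, ?_, ?_⟩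
  · intro x y hxy
    by_contra! h
    refine hxy (hCinj ((hCmax x).2 _ (hCmax y).1 fun v hv => ?_))
    exact (hP _ _).1 (h v ((hP _ _).2 hv))
  · intro u v a x b hxa hxb hab ha hb hx
    refine hsep u v a b x (.cons hxa.symm (.cons hxb .nil)) ?_ (by simp) ha hb hx
    simp [Walk.cons_isPath_iff, hxa.ne', hxb.ne, hab]
  · intro u v a x y b hxa hxy hyb hay hxb ha hb hx
    have hpp : (Walk.cons hxy (.cons hyb .nil) : T.Walk x b).IsPath := by
      simp [Walk.cons_isPath_iff, hxy.ne, hyb.ne, hxb]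
    have hab : a ≠ b := by
      rintro rfl
      exact hay (hT.isAcyclic.eq_snd_of_adj_start hpp hxa (by simp))
    refine hsep u v a b x (.cons hxa.symm (.cons hxy (.cons hyb .nil))) ?_ (by simp) ha hb hx
    simp [Walk.cons_isPath_iff, hxa.ne', hxy.ne, hyb.ne, hxb, hay, hab]

/-! ### Classification of the nodes -/

section Local

variable {V β : Type*} {T : SimpleGraph β} {P : V → Set β}

lemma exists_through {v : V} {x : β} (hx : x ∈ P v) (h : ¬ IsPathEnd T (P v) x) :
    ∃ a b, a ≠ b ∧ T.Adj x a ∧ T.Adj x b ∧ a ∈ P v ∧ b ∈ P v := by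
  by_contra! hno
  refine h ⟨hx, fun a ha b hb => ?_⟩
  by_contra hab
  exact hno a b hab ha.2 hb.2 ha.1 hb.1

lemma not_isPathEnd {v : V} {x a b : β} (hab : a ≠ b) (hxa : T.Adj x a) (hxb : T.Adj x b)
    (ha : a ∈ P v) (hb : b ∈ P v) : ¬ IsPathEnd T (P v) x :=
  fun h => hab (h.2 ⟨ha, hxa⟩ ⟨hb, hxb⟩)

lemma IsJunction.not_isTerminal (M : LocalModel T P) {x y : β} (hxy : T.Adj x y)
    (hx : IsJunction T P x) : ¬ IsTerminal T P x := by
  intro h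
  obtain ⟨v, hv, -⟩ := M.edge x y hxy
  exact hx v hv (h v hv)

/-- At a node `x` with neighbours `a`, `b`, `c`, no path running through `b - x - a` continues
beyond `a`, provided that every path at `x` uses two of the three neighbours and some path
runs through `a - x - c`. -/
lemma no_extension (M : LocalModel T P) {x a b c : β}
    (hxa : T.Adj x a) (hxb : T.Adj x b) (hxc : T.Adj x c) (hab : a ≠ b) (hac : a ≠ c) (hbc : b ≠ c)
    (h2 : ∀ r, x ∈ P r → (a ∈ P r ∨ b ∈ P r) ∧ (a ∈ P r ∨ c ∈ P r) ∧ (b ∈ P r ∨ c ∈ P r))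
    {w q : V} (hxw : x ∈ P w) (haw : a ∈ P w) (hcw : c ∈ P w) {z : β} (haz : T.Adj a z)
    (hzx : z ≠ x) (hzq : z ∈ P q) (hxq : x ∈ P q) (hbq : b ∈ P q) : False := by
  -- every path using the edge `xa` contains `z`
  have hc : ∀ r, x ∈ P r → a ∈ P r → c ∈ P r → z ∈ P r := by
    intro r hx ha hc
    rcases M.sep' q r b x a z hxb hxa haz hab.symm hzx.symm hbq hzq hx with h | h
    · have := M.deg_two r x a b c hx ha h hc hxa hxb hxc
      tauto
    · exact h
  have hb : ∀ r, x ∈ P r → a ∈ P r → b ∈ P r → z ∈ P r := by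
    intro r hx ha hb
    rcases M.sep' w r c x a z hxc hxa haz hac.symm hzx.symm hcw (hc w hxw haw hcw) hx with h | h
    · have := M.deg_two r x a b c hx ha hb h hxa hxb hxc
      tauto
    · exact h
  obtain ⟨r, har, hzr⟩ := M.not_incl a z haz.ne
  rcases M.sep q r x a z hxa.symm haz hzx.symm hxq hzq har with h | h
  · rcases (h2 r h).2.2 with h' | h'
    · exact hzr (hb r h har h')
    · exact hzr (hc r h har h')
  · exact hzr h

lemma isTerminal_of_three (M : LocalModel T P) {x a b c : β}
    (hxa : T.Adj x a) (hxb : T.Adj x b) (hxc : T.Adj x c) (hab : a ≠ b) (hac : a ≠ c) (hbc : b ≠ c)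
    (h2 : ∀ r, x ∈ P r → (a ∈ P r ∨ b ∈ P r) ∧ (a ∈ P r ∨ c ∈ P r) ∧ (b ∈ P r ∨ c ∈ P r))
    {v w : V} (hxv : x ∈ P v) (hav : a ∈ P v) (hbv : b ∈ P v)
    (hxw : x ∈ P w) (haw : a ∈ P w) (hcw : c ∈ P w) : IsTerminal T P a := by
  intro q haq
  by_contra hend
  obtain ⟨z, z', hzz, haz, haz', hz, hz'⟩ := exists_through haq hend
  have hext : ∃ q z, T.Adj a z ∧ z ≠ x ∧ z ∈ P q ∧ x ∈ P q ∧ a ∈ P q := by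
    by_cases h1 : z = x
    · subst h1; exact ⟨q, z', haz', hzz.symm, hz', hz, haq⟩
    by_cases h2 : z' = x
    · subst h2; exact ⟨q, z, haz, hzz, hz, hz', haq⟩
    rcases M.sep q v z a z' haz haz' hzz hz hz' hav with h | h
    · exact ⟨v, z, haz, h1, h, hxv, hav⟩
    · exact ⟨v, z', haz', h2, h, hxv, hav⟩
  obtain ⟨q, z, haz, hzx, hzq, hxq, haq⟩ := hext
  rcases (h2 q hxq).2.2 with h | h
  · exact no_extension M hxa hxb hxc hab hac hbc h2 hxw haw hcw haz hzx hzq hxq h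
  · refine no_extension M hxa hxc hxb hac hab hbc.symm (fun r hr => ?_) hxv hav hbv
      haz hzx hzq hxq h
    have := h2 r hr
    tauto

/-- If two paths run through `a - x - b` and `a - x - c`, then `x` is a junction of degree three
with terminal neighbours: since the bag of `x` is not contained in that of `a`, some path avoids
`a`, and non-crossing forces it to run through `b - x - c`. -/
lemma junction_of_three (M : LocalModel T P) {x a b c : β}
    (hxa : T.Adj x a) (hxb : T.Adj x b) (hxc : T.Adj x c) (hab : a ≠ b) (hac : a ≠ c) (hbc : b ≠ c)
    {v w : V} (hxv : x ∈ P v) (hav : a ∈ P v) (hbv : b ∈ P v)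
    (hxw : x ∈ P w) (haw : a ∈ P w) (hcw : c ∈ P w) :
    IsJunction T P x ∧ (T.neighborSet x).ncard = 3 ∧ ∀ y ∈ T.neighborSet x, IsTerminal T P y := by
  obtain ⟨u, hxu, hau⟩ := M.not_incl x a hxa.ne
  have hbu : b ∈ P u := (M.sep v u a x b hxa hxb hab hav hbv hxu).resolve_left hau
  have hcu : c ∈ P u := (M.sep w u a x c hxa hxc hac haw hcw hxu).resolve_left hau
  have h2 : ∀ r, x ∈ P r → (a ∈ P r ∨ b ∈ P r) ∧ (a ∈ P r ∨ c ∈ P r) ∧ (b ∈ P r ∨ c ∈ P r) :=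
    fun r hr => ⟨M.sep v r a x b hxa hxb hab hav hbv hr, M.sep w r a x c hxa hxc hac haw hcw hr,
      M.sep u r b x c hxb hxc hbc hbu hcu hr⟩
  have hN : T.neighborSet x = {a, b, c} := by
    ext d
    simp only [mem_neighborSet, Set.mem_insert_iff, Set.mem_singleton_iff]
    constructor
    · intro hd
      obtain ⟨r, hxr, hdr⟩ := M.edge x d hd
      have hD := M.deg_two r x
      obtain ⟨h1, h3, h4⟩ := h2 r hxr
      rcases h1 with h1 | h1
      · rcases h4 with h4 | h4
        · have := hD a b d hxr h1 h4 hdr hxa hxb hd; grind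
        · have := hD a c d hxr h1 h4 hdr hxa hxc hd; grind
      · rcases h3 with h3 | h3
        · have := hD a b d hxr h3 h1 hdr hxa hxb hd; grind
        · have := hD b c d hxr h1 h3 hdr hxb hxc hd; grind
    · rintro (rfl | rfl | rfl) <;> assumption
  refine ⟨fun r hr => ?_, ?_, ?_⟩
  · obtain ⟨h1, h3, h4⟩ := h2 r hr
    rcases h1 with h1 | h1
    · rcases h4 with h4 | h4
      · exact not_isPathEnd hab hxa hxb h1 h4
      · exact not_isPathEnd hac hxa hxc h1 h4
    · rcases h3 with h3 | h3
      · exact not_isPathEnd hab hxa hxb h3 h1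
      · exact not_isPathEnd hbc hxb hxc h1 h3
  · rw [hN, Set.ncard_eq_three]
    exact ⟨a, b, c, hab, hac, hbc, rfl⟩
  · rw [hN]
    rintro y (rfl | rfl | rfl)
    · exact isTerminal_of_three M hxa hxb hxc hab hac hbc h2 hxv hav hbv hxw haw hcw
    · exact isTerminal_of_three M hxb hxa hxc hab.symm hbc hac
        (fun r hr => by have := h2 r hr; tauto) hxv hbv hav hxu hbu hcu
    · exact isTerminal_of_three M hxc hxa hxb hac.symm hbc.symm hab
        (fun r hr => by have := h2 r hr; tauto) hxw hcw haw hxu hcu hbu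

/-- Every node is a terminal, a mixed node of degree two, or a junction of degree three whose
neighbours are terminals. -/
lemma classify (M : LocalModel T P) {x : β} (hx : ¬ IsTerminal T P x) :
    ((T.neighborSet x).ncard = 2 ∧ IsMixed T P x) ∨
    (IsJunction T P x ∧ (T.neighborSet x).ncard = 3 ∧
      ∀ y ∈ T.neighborSet x, IsTerminal T P y) := by
  have hx' := hx
  simp only [IsTerminal, not_forall] at hx'
  obtain ⟨v, hxv, hend⟩ := hx'
  obtain ⟨a, b, hab, hxa, hxb, hav, hbv⟩ := exists_through hxv hend
  by_cases h : ∃ c, T.Adj x c ∧ c ≠ a ∧ c ≠ b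
  · right
    obtain ⟨c, hxc, hca, hcb⟩ := h
    obtain ⟨w, hxw, hcw⟩ := M.edge x c hxc
    rcases M.sep v w a x b hxa hxb hab hav hbv hxw with haw | hbw
    · exact junction_of_three M hxa hxb hxc hab hca.symm hcb.symm hxv hav hbv hxw haw hcw
    · exact junction_of_three M hxb hxa hxc hab.symm hcb.symm hca.symm hxv hbv hav hxw hbw hcw
  · left
    push Not at h
    refine ⟨?_, hx, fun hJ => ?_⟩
    · rw [Set.ncard_eq_two]
      refine ⟨a, b, hab, ?_⟩
      ext d
      simp only [mem_neighborSet, Set.mem_insert_iff, Set.mem_singleton_iff]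
      constructor
      · intro hd
        by_cases hda : d = a
        · exact Or.inl hda
        · exact Or.inr (h d hd hda)
      · rintro (rfl | rfl) <;> assumption
    · obtain ⟨w, hxw, haw⟩ := M.not_incl x a hxa.ne
      refine hJ w hxw ⟨hxw, ?_⟩
      have key : ∀ d, d ∈ P w → T.Adj x d → d = b :=
        fun d hd hxd => h d hxd (by rintro rfl; exact haw hd)
      intro d hd e he
      rw [key d hd.1 hd.2, key e he.1 he.2]

/-! ### Admissible parts -/

lemma eq_or_eq_of_ncard_eq_two {x a b c : β} (h : (T.neighborSet x).ncard = 2) (ha : T.Adj x a)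
    (hb : T.Adj x b) (hab : a ≠ b) (hc : T.Adj x c) : c = a ∨ c = b := by
  obtain ⟨p, q, -, hN⟩ := Set.ncard_eq_two.1 h
  have h1 : a ∈ T.neighborSet x := ha
  have h2 : b ∈ T.neighborSet x := hb
  have h3 : c ∈ T.neighborSet x := hc
  rw [hN] at h1 h2 h3
  simp only [Set.mem_insert_iff, Set.mem_singleton_iff] at h1 h2 h3
  grind

lemma part_subset {p : Set (Sym2 β)} (hp : StarPart T P p ∨ PathPart T P p) : p ⊆ T.edgeSet := by
  rcases hp with ⟨x, -, -, -, rfl⟩ | ⟨k, z, -, -, hadj, -, -, -, rfl⟩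
  · exact fun e he => he.1
  · rintro e ⟨i, hi, rfl⟩
    exact hadj i hi

lemma part_nonempty {p : Set (Sym2 β)} (hp : StarPart T P p ∨ PathPart T P p) : p.Nonempty := by
  rcases hp with ⟨x, -, h3, -, rfl⟩ | ⟨k, z, hk, -, -, -, -, -, rfl⟩
  · obtain ⟨y, hy⟩ := Set.nonempty_of_ncard_ne_zero (s := T.neighborSet x) (by omega)
    exact ⟨s(x, y), hy, by simp⟩
  · exact ⟨s(z 0, z 1), 0, hk, rfl⟩

/-- An admissible part is closed under passing to another edge at a nonterminal node. -/
lemma part_closed {p : Set (Sym2 β)} (hp : StarPart T P p ∨ PathPart T P p) {e f : Sym2 β}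
    (he : e ∈ p) (hf : f ∈ T.edgeSet) {x : β} (hxe : x ∈ e) (hxf : x ∈ f)
    (hx : ¬ IsTerminal T P x) : f ∈ p := by
  rcases hp with ⟨j, -, -, hterm, rfl⟩ | ⟨k, z, hk, hinj, hadj, h0, hend, hint, rfl⟩
  · obtain ⟨y, rfl⟩ := Sym2.mem_iff_exists.1 he.2
    rcases Sym2.mem_iff.1 hxe with rfl | rfl
    · exact ⟨hf, hxf⟩
    · exact absurd (hterm x he.1) hx
  · have hidx : ∃ m, 0 < m ∧ m < k ∧ x = z m := by
      obtain ⟨i, hi, rfl⟩ := he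
      rcases Sym2.mem_iff.1 hxe with rfl | rfl
      · refine ⟨i, Nat.pos_of_ne_zero ?_, hi, rfl⟩
        rintro rfl
        exact hx h0
      · refine ⟨i + 1, Nat.succ_pos _, lt_of_le_of_ne hi ?_, rfl⟩
        intro h
        exact hx (h ▸ hend)
    obtain ⟨m, hm0, hmk, rfl⟩ := hidx
    obtain ⟨m, rfl⟩ : ∃ n, m = n + 1 := ⟨m - 1, by omega⟩
    obtain ⟨y, rfl⟩ := Sym2.mem_iff_exists.1 hxf
    have hne : z m ≠ z (m + 1 + 1) := fun h => by
      have := hinj _ _ (by omega) (by omega) h; omega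
    rcases eq_or_eq_of_ncard_eq_two (hint _ hm0 hmk).1 (hadj m (by omega)).symm
      (hadj (m + 1) hmk) hne hf with rfl | rfl
    · exact ⟨m, by omega, Sym2.eq_swap⟩
    · exact ⟨m + 1, hmk, rfl⟩

/-- Any two edges of an admissible part are linked by consecutive edges sharing nonterminal nodes,
so another admissible part meeting it contains it. -/
lemma part_subset_part (M : LocalModel T P) {p q : Set (Sym2 β)}
    (hp : StarPart T P p ∨ PathPart T P p) (hq : StarPart T P q ∨ PathPart T P q) {e : Sym2 β}
    (hep : e ∈ p) (heq : e ∈ q) : p ⊆ q := by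
  have hpE := part_subset hp
  intro f hf
  rcases hp with ⟨j, hj, -, -, rfl⟩ | ⟨k, z, hk, hinj, hadj, h0, hend, hint, rfl⟩
  · obtain ⟨y, rfl⟩ := Sym2.mem_iff_exists.1 hep.2
    exact part_closed hq heq hf.1 hep.2 hf.2 (hj.not_isTerminal M hep.1)
  · have key : ∀ m, m < k → (s(z m, z (m + 1)) ∈ q ↔ s(z 0, z 1) ∈ q) := by
      intro m
      induction m with
      | zero => simp
      | succ m ih =>
        intro hm
        rw [← ih (by omega)]
        have hx := (hint (m + 1) (by omega) hm).2.1
        exact ⟨fun h => part_closed hq h (hadj m (by omega)) (by simp) (by simp) hx,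
          fun h => part_closed hq h (hadj (m + 1) hm) (by simp) (by simp) hx⟩
    obtain ⟨i, hi, rfl⟩ := hep
    obtain ⟨l, hl, rfl⟩ := hf
    exact (key l hl).2 ((key i hi).1 heq)

lemma part_eq_part (M : LocalModel T P) {p q : Set (Sym2 β)}
    (hp : StarPart T P p ∨ PathPart T P p) (hq : StarPart T P q ∨ PathPart T P q) {e : Sym2 β}
    (hep : e ∈ p) (heq : e ∈ q) : p = q :=
  Set.Subset.antisymm (part_subset_part M hp hq hep heq) (part_subset_part M hq hp heq hep)

/-! ### Every edge lies in an admissible part -/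

/-- `w` is a path in the tree all of whose internal nodes are mixed of degree two. -/
def IsThread (T : SimpleGraph β) (P : V → Set β) {a b : β} (w : T.Walk a b) : Prop :=
  w.IsPath ∧ ∀ i, 0 < i → i < w.length →
    (T.neighborSet (w.getVert i)).ncard = 2 ∧ IsMixed T P (w.getVert i)

lemma IsThread.reverse {a b : β} {w : T.Walk a b} (h : IsThread T P w) :
    IsThread T P w.reverse := by
  refine ⟨h.1.reverse, fun i hi hl => ?_⟩
  rw [Walk.length_reverse] at hl
  rw [Walk.getVert_reverse]
  exact h.2 _ (by omega) (by omega)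

/-- A thread whose first node is mixed of degree two extends beyond it. -/
lemma IsThread.extend (hT : T.IsAcyclic) {a b : β} {w : T.Walk a b} (h : IsThread T P w)
    (ha : (T.neighborSet a).ncard = 2 ∧ IsMixed T P a) :
    ∃ (a' : β) (h' : T.Adj a' a), IsThread T P (Walk.cons h' w) := by
  obtain ⟨p, q, hpq, hN⟩ := Set.ncard_eq_two.1 ha.1
  obtain ⟨a', haa', hne⟩ : ∃ a', T.Adj a a' ∧ a' ≠ w.snd := by
    have hp : p ∈ T.neighborSet a := by simp [hN]
    have hq : q ∈ T.neighborSet a := by simp [hN]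
    by_cases hps : p = w.snd
    · exact ⟨q, hq, fun h => hpq (hps.trans h.symm)⟩
    · exact ⟨p, hp, hps⟩
  refine ⟨a', haa'.symm, ?_, ?_⟩
  · refine h.1.cons fun hmem => hne ?_
    exact hT.eq_snd_of_adj_start h.1 haa' hmem
  · intro i hi hl
    obtain ⟨i, rfl⟩ : ∃ n, i = n + 1 := ⟨i - 1, by omega⟩
    rw [Walk.length_cons] at hl
    rw [Walk.getVert_cons_succ]
    rcases Nat.eq_zero_or_pos i with rfl | hi
    · simpa using ha
    · exact h.2 i hi (by omega)

lemma exists_part (M : LocalModel T P) [Finite β] (hT : T.IsAcyclic) {e : Sym2 β}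
    (he : e ∈ T.edgeSet) : ∃ p, (StarPart T P p ∨ PathPart T P p) ∧ e ∈ p := by
  classical
  have := Fintype.ofFinite β
  by_cases hJ : ∃ x ∈ e, IsJunction T P x
  · obtain ⟨x, hxe, hx⟩ := hJ
    obtain ⟨y, rfl⟩ := Sym2.mem_iff_exists.1 hxe
    have hnt := hx.not_isTerminal M he
    rcases classify M hnt with h | h
    · exact absurd hx h.2.2
    · exact ⟨_, Or.inl ⟨x, h.1, h.2.1, h.2.2, rfl⟩, he, hxe⟩
  push Not at hJ
  -- a longest thread through `e` has terminal ends
  let Q : ℕ → Prop := fun n => ∃ (a b : β) (w : T.Walk a b), IsThread T P w ∧ e ∈ w.edges ∧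
    w.length = n
  have hQb : ∀ n, Q n → n ≤ Fintype.card β := by
    rintro n ⟨a, b, w, hw, -, rfl⟩
    exact hw.1.length_lt.le
  have hQ1 : Q 1 := by
    induction e using Sym2.ind with
    | _ x y =>
      have hxy : T.Adj x y := he
      refine ⟨x, y, Walk.cons hxy .nil, ⟨?_, ?_⟩, by simp, by simp⟩
      · simp [hxy.ne]
      · intro i hi hl
        simp at hl
        omega
  obtain ⟨n, hn, hmax⟩ : ∃ n, Q n ∧ ∀ m, Q m → m ≤ n := by
    refine ⟨Nat.findGreatest Q (Fintype.card β), Nat.findGreatest_spec (hQb 1 hQ1) hQ1,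
      fun m hm => Nat.le_findGreatest (hQb m hm) hm⟩
  have hterm : ∀ (a b : β) (w : T.Walk a b), IsThread T P w → e ∈ w.edges → w.length = n →
      IsTerminal T P a := by
    intro a b w hw hew hl
    by_contra ha
    rcases classify M ha with h | h
    · obtain ⟨a', h', hth⟩ := hw.extend hT h
      have := hmax (n + 1) ⟨a', b, _, hth, by simp [hew], by simp [hl]⟩
      omega
    · -- the next node on the thread is terminal, so the thread is the single edge `e`
      cases w with
      | nil => simp at hew
      | @cons _ c _ hac w' =>
        have hc := h.2.2 c hac
        rcases Nat.eq_zero_or_pos w'.length with h0 | h0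
        · have hcb := Walk.eq_of_length_eq_zero h0
          subst hcb
          rw [Walk.eq_nil_iff_nil.2 (Walk.length_eq_zero_iff.1 h0)] at hew
          simp only [Walk.edges_cons, Walk.edges_nil, List.mem_singleton] at hew
          exact hJ a (by simp [hew]) h.1
        · have := (hw.2 1 (by omega) (by rw [Walk.length_cons]; omega)).2.1
          simp at this
          exact this hc
  obtain ⟨a, b, w, hw, hew, hl⟩ := hn
  have h1n := hmax 1 hQ1
  have hb : IsTerminal T P b := hterm b a w.reverse hw.reverse (by simp [hew]) (by simp [hl])
  refine ⟨_, Or.inr ⟨w.length, w.getVert, by omega, ?_, ?_, ?_, ?_, hw.2, rfl⟩, ?_⟩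
  · intro i j hi hj hij
    exact hw.1.getVert_injOn hi hj hij
  · intro i hi
    exact w.adj_getVert_succ hi
  · rw [Walk.getVert_zero]
    exact hterm a b w hw hew hl
  · rwa [Walk.getVert_length]
  · induction e using Sym2.ind with
    | _ x y =>
      obtain ⟨i, hi, h⟩ := (Walk.mk_mem_edges_iff_exists w).1 hew
      exact ⟨i, hi, h.symm⟩

end Local

/-- the edge set of the host tree of a clique NC-path-tree model
uniquely partitions into junction-stars and terminal-to-terminal paths. -/
theorem stmt_9
    {V β : Type*} [Fintype V] (G : SimpleGraph V) (hconn : G.Connected)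
    (T : SimpleGraph β) (hT : T.IsTree)
    (C : β → Set V) (hCinj : Function.Injective C)
    (hCmax : ∀ x : β, IsMaxClique G (C x))
    (hCsurj : ∀ s : Set V, IsMaxClique G s → ∃ x : β, C x = s)
    (P : V → Set β) (hP : ∀ (v : V) (x : β), x ∈ P v ↔ v ∈ C x)
    (hpath : ∀ v : V, InducesPath T (P v))
    (hnc : ∀ u v : V, u ≠ v → NonCrossing T (P u) (P v))
    (hE : T.edgeSet.Nonempty) :
    ∃! Ps : Set (Set (Sym2 β)),
      (∀ p ∈ Ps, p.Nonempty) ∧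
      (⋃₀ Ps = T.edgeSet) ∧
      (∀ p ∈ Ps, ∀ q ∈ Ps, p ≠ q → p ∩ q = ∅) ∧
      (∀ p ∈ Ps, StarPart T P p ∨ PathPart T P p) := by
  have M := localModel G hconn T hT C hCinj hCmax hCsurj P hP hpath hnc
  have : Finite β := Finite.of_injective C hCinj
  refine ⟨{p | StarPart T P p ∨ PathPart T P p},
    ⟨fun p hp => part_nonempty hp, ?_, ?_, fun p hp => hp⟩, ?_⟩
  · ext e
    constructor
    · rintro ⟨p, hp, hep⟩
      exact part_subset hp hep
    · intro he
      obtain ⟨p, hp, hep⟩ := exists_part M hT.isAcyclic he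
      exact ⟨p, hp, hep⟩
  · intro p hp q hq hpq
    rw [← Set.not_nonempty_iff_eq_empty]
    rintro ⟨e, hep, heq⟩
    exact hpq (part_eq_part M hp hq hep heq)
  · rintro Ps ⟨-, hcover, -, hPs⟩
    refine Set.Subset.antisymm hPs fun p hp => ?_
    obtain ⟨e, he⟩ := part_nonempty hp
    have he' : e ∈ ⋃₀ Ps := hcover ▸ part_subset hp he
    obtain ⟨q, hq, heq⟩ := he'
    rwa [part_eq_part M hp (hPs q hq) he heq]
end

section
/- A finite connected simple graph G is chordal, claw-free, and 3-sun-free if and only if G has an NC-path-r.tree model, i.e., an NC-path-tree model ({P_v}, T) together with a root node r of T such that for every vertex v, one endpoint of the path P_v is an ancestor (with respect to the root r) of every node of P_v. -/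
/-!
If `G` has a rooted non-crossing path model, every path `P v` is a chain for the ancestor order
of the tree and has a highest node, its top. Of two adjacent vertices, the deeper top lies on both
paths. Non-crossing enters through one observation (`RootedModel.top_mem_or`): of two non-adjacent
neighbours of `v`, one contains the top of `P v`. Otherwise both have their tops on `P v`, strictly
below its top, so by non-crossing each contains the rest of `P v` below its own top, and the two
paths meet. Both cannot contain the top of `P v`, since their own paths are disjoint. Hence no
vertex has three pairwise non-adjacent neighbours. In an induced cycle of length at least four, the
two neighbours of a vertex with deepest top both contain that top and hence are adjacent. In a
3-sun, the deepest of the three tops of triangle vertices lies on the paths of all three, hence on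
no path of an outer vertex, as each outer vertex has a non-neighbour in the triangle; but it must
lie on the path of one of the two outer neighbours of the triangle vertex it belongs to.

Conversely, let `G` be connected, chordal, claw-free and 3-sun-free, and arrange its vertices in
layers by the distance from a root. Since minimal separators of chordal graphs are cliques, the
parents of a vertex (its neighbours in the previous layer) form a clique, and adjacent vertices of
one layer have nested parent sets. From the second layer on, the components of the layers are
cliques, as otherwise there is a claw or a 3-sun. A vertex of the last layer with the fewest
parents is therefore simplicial, and for a simplicial root all layers behave like this
(`CliqueLayering`). The absence of claws also shows that if `u` has a parent which is not a parent
of its neighbour `v` in the same layer, then all children of `u` are children of `v`.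

The tree of the model has the vertices of `G` as its nodes. They are ranked by layers and within a
component by decreasing number of parents, and the parent of a node is the last one ranked before
it in its own component or in the component of its parents. The node set of `v` consists of
the members of its component all of whose parents are parents of `v`, together with the children
of `v`. These sets meet exactly for adjacent vertices (`CliqueLayering.adj_iff`); they are segments
of branches of the tree (`CliqueLayering.isSegment`), and so are their differences
(`CliqueLayering.isSegment_diff`).
-/

open SimpleGraph

/-! ### The ancestor order of a rooted tree -/

section Ancestors

variable {β : Type*} {T : SimpleGraph β} {r a b c x y : β}

theorem Ancestor.of_mem (hT : T.IsTree) {p : T.Walk b r} (hp : p.IsPath) (h : a ∈ p.support) :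
    Ancestor T r a b := by
  intro w hw
  rwa [(hT.existsUnique_path b r).unique hw hp]

theorem Ancestor.refl (T : SimpleGraph β) (r a : β) : Ancestor T r a a :=
  fun w _ => w.start_mem_support

theorem Ancestor.trans (hT : T.IsTree) (h₁ : Ancestor T r a b) (h₂ : Ancestor T r b c) :
    Ancestor T r a c := by
  classical
  obtain ⟨p, hp, -⟩ := hT.existsUnique_path c r
  have hb := h₂ p hp
  exact .of_mem hT hp (p.support_dropUntil_subset_support hb (h₁ _ (hp.dropUntil hb)))

theorem Ancestor.dist_lt (hT : T.IsTree) (h : Ancestor T r a b) (hne : a ≠ b) :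
    T.dist a r < T.dist b r := by
  classical
  obtain ⟨p, hp, hl⟩ := hT.connected.exists_path_of_dist b r
  have ha := h p hp
  have h1 := congrArg Walk.length (p.take_spec ha)
  rw [Walk.length_append] at h1
  have h2 := dist_le (p.dropUntil a ha)
  have h3 : (p.takeUntil a ha).length ≠ 0 := fun h0 => hne (Walk.eq_of_length_eq_zero h0).symm
  omega

theorem Ancestor.antisymm (hT : T.IsTree) (h₁ : Ancestor T r a b) (h₂ : Ancestor T r b a) :
    a = b := by
  by_contra hne
  have := h₁.dist_lt hT hne
  have := h₂.dist_lt hT (Ne.symm hne)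
  omega

theorem Ancestor.total (hT : T.IsTree) (h₁ : Ancestor T r a c) (h₂ : Ancestor T r b c) :
    Ancestor T r a b ∨ Ancestor T r b a := by
  obtain ⟨p, hp, -⟩ := hT.existsUnique_path c r
  replace h₁ := h₁ p hp
  replace h₂ := h₂ p hp
  induction p with
  | nil =>
    simp only [Walk.support_nil, List.mem_singleton] at h₁ h₂
    subst h₁ h₂
    exact .inl (.refl _ _ _)
  | cons hadj p ih =>
    rw [Walk.support_cons, List.mem_cons] at h₁ h₂
    have hp' := hp
    rw [Walk.cons_isPath_iff] at hp
    rcases h₁ with rfl | h₁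
    · exact .inr (.of_mem hT hp' (by simpa using h₂))
    · rcases h₂ with rfl | h₂
      · exact .inl (.of_mem hT hp' (by simpa using .inr h₁))
      · exact ih hp.1 h₁ h₂

theorem Ancestor.of_adj (hT : T.IsTree) (r : β) (h : T.Adj x y) :
    Ancestor T r x y ∨ Ancestor T r y x := by
  obtain ⟨p, hp, -⟩ := hT.existsUnique_path y r
  by_cases hx : x ∈ p.support
  · exact .inl (.of_mem hT hp hx)
  · exact .inr (.of_mem hT (hp.cons (h := h) hx) (by simp))

/-- The ancestor endpoint of an edge is the parent of the other one. -/
theorem Ancestor.of_adj_of_ne (hT : T.IsTree) (h : T.Adj x y) (hxy : Ancestor T r x y)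
    (ha : Ancestor T r a y) (hne : a ≠ y) : Ancestor T r a x := by
  obtain ⟨p, hp, -⟩ := hT.existsUnique_path x r
  by_cases hy : y ∈ p.support
  · exact absurd (hxy.antisymm hT (.of_mem hT hp hy)) h.ne
  · have := ha _ (hp.cons (h := h.symm) hy)
    rw [Walk.support_cons, List.mem_cons] at this
    exact .of_mem hT hp (this.resolve_left hne)

/-- In a connected node set avoiding `a`, either all nodes or no nodes are descendants of `a`. -/
theorem Ancestor.of_preconnected (hT : T.IsTree) {S : Set β} (hS : (T.induce S).Preconnected)
    (haS : a ∉ S) (hx : x ∈ S) (hy : y ∈ S) (h : Ancestor T r a x) : Ancestor T r a y := by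
  obtain ⟨w⟩ := hS ⟨x, hx⟩ ⟨y, hy⟩
  suffices H : ∀ (u v : S) (w : (T.induce S).Walk u v), Ancestor T r a u → Ancestor T r a v from
    H _ _ w h
  intro u v w
  induction w with
  | nil => exact id
  | @cons u v _ huv _ ih =>
    intro hu
    apply ih
    have huv : T.Adj u v := huv
    rcases Ancestor.of_adj hT r huv with h1 | h1
    · exact hu.trans hT h1
    · exact .of_adj_of_ne hT huv.symm h1 hu (by rintro rfl; exact haS u.2)

/-- An induced path with endpoint `e` can be enumerated from `e`. -/
theorem InducesPath.enum {S : Set β} {e : β} (hS : InducesPath T S) (he : IsPathEnd T S e) :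
    ∃ (n : ℕ) (g : ℕ → β), g 0 = e ∧ (∀ x, x ∈ S ↔ ∃ i ≤ n, g i = x) ∧
      (∀ i < n, T.Adj (g i) (g (i + 1))) ∧ ∀ i ≤ n, ∀ j ≤ n, g i = g j → i = j := by
  obtain ⟨n, f, hf, rfl, hadj⟩ := hS
  obtain ⟨⟨k, rfl⟩, hk⟩ := he
  have hk : k.val = 0 ∨ k.val = n := by
    by_contra! hcon
    have h1 : f ⟨k.val - 1, by omega⟩ = f ⟨k.val + 1, by omega⟩ :=
      hk ⟨⟨_, rfl⟩, (hadj _ _).2 (by simp; omega)⟩ ⟨⟨_, rfl⟩, (hadj _ _).2 (by simp)⟩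
    have := congrArg Fin.val (hf h1)
    simp at this
  rcases hk with hk | hk
  · refine ⟨n, fun i => if h : i ≤ n then f ⟨i, by omega⟩ else f 0, ?_, ?_, ?_, ?_⟩
    · simp only [Nat.zero_le, dif_pos]
      congr 1
      ext; simp [hk]
    · intro x
      constructor
      · rintro ⟨i, rfl⟩
        exact ⟨i, by omega, by simp [Nat.lt_succ_iff.1 i.2]⟩
      · rintro ⟨i, hi, rfl⟩
        simp [hi]
    · intro i hi
      simp only [hi.le, Nat.succ_le_of_lt hi, dif_pos]
      exact (hadj _ _).2 (.inl rfl)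
    · intro i hi j hj h
      simp only [hi, hj, dif_pos] at h
      simpa using hf h
  · refine ⟨n, fun i => f ⟨n - i, by omega⟩, ?_, ?_, ?_, ?_⟩
    · simp only [Nat.sub_zero]
      congr 1
      ext; simp [hk]
    · intro x
      constructor
      · rintro ⟨i, rfl⟩
        exact ⟨n - i, by omega, congrArg f (Fin.ext (by simp; omega))⟩
      · rintro ⟨i, hi, rfl⟩
        simp
    · intro i hi
      exact (hadj _ _).2 (.inr (by simp; omega))
    · intro i hi j hj h
      have := congrArg Fin.val (hf h)
      simp at this
      omega

/-- A path all of whose nodes descend from its endpoint `e` is a chain for the ancestor order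
and contains every node lying between `e` and one of its nodes. -/
theorem vertical_facts (hT : T.IsTree) {S : Set β} {e : β} (hS : InducesPath T S)
    (he : IsPathEnd T S e) (hanc : ∀ x ∈ S, Ancestor T r e x) :
    (∀ x ∈ S, ∀ a, Ancestor T r e a → Ancestor T r a x → a ∈ S) ∧
    (∀ x ∈ S, ∀ y ∈ S, Ancestor T r x y ∨ Ancestor T r y x) := by
  obtain ⟨n, g, rfl, hmem, hadj, hinj⟩ := hS.enum he
  have hin : ∀ i ≤ n, g i ∈ S := fun i hi => (hmem _).2 ⟨i, hi, rfl⟩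
  have hstep : ∀ i < n, Ancestor T r (g i) (g (i + 1)) := by
    intro i
    induction i with
    | zero => exact fun hi => hanc _ (hin _ hi)
    | succ i ih =>
      intro hi
      have h0 := ih (by omega)
      rcases Ancestor.of_adj hT r (hadj (i + 1) hi) with h | h
      · exact h
      -- otherwise `g i` and `g (i + 2)` are both the parent of `g (i + 1)`
      · have h1 : Ancestor T r (g (i + 1 + 1)) (g i) :=
          .of_adj_of_ne hT (hadj i (by omega)) h0 h (hadj (i + 1) hi).ne'
        have h2 : Ancestor T r (g i) (g (i + 1 + 1)) :=
          .of_adj_of_ne hT (hadj (i + 1) hi).symm h h0 (hadj i (by omega)).ne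
        have := hinj _ (by omega) _ (by omega) (h1.antisymm hT h2)
        omega
  constructor
  · intro x hx a hea hax
    obtain ⟨i, hi, rfl⟩ := (hmem x).1 hx
    induction i with
    | zero => rw [hax.antisymm hT hea]; exact hx
    | succ i ih =>
      by_cases hne : a = g (i + 1)
      · rw [hne]; exact hx
      · exact ih (by omega) (hin _ (by omega)) (.of_adj_of_ne hT (hadj i hi) (hstep i hi) hax hne)
  · have hle : ∀ i j, i ≤ j → j ≤ n → Ancestor T r (g i) (g j) := by
      intro i j hij
      induction j, hij using Nat.le_induction with
      | base => exact fun _ => .refl _ _ _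
      | succ j _ ih => exact fun hj => (ih (by omega)).trans hT (hstep j hj)
    intro x hx y hy
    obtain ⟨i, hi, rfl⟩ := (hmem x).1 hx
    obtain ⟨j, hj, rfl⟩ := (hmem y).1 hy
    rcases le_total i j with h | h
    · exact .inl (hle _ _ h hj)
    · exact .inr (hle _ _ h hi)

end Ancestors

/-! ### Graphs with a rooted non-crossing path model -/

section Model

variable {V β : Type*} {G : SimpleGraph V} {T : SimpleGraph β} {P : V → Set β} {r : β} {e : V → β}

/-- The properties of a rooted non-crossing path model that are used to exclude induced
subgraphs; `e v` is the top node of `P v`. -/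
structure RootedModel (G : SimpleGraph V) (T : SimpleGraph β) (P : V → Set β) (r : β)
    (e : V → β) : Prop where
  tree : T.IsTree
  adj : ∀ u v, u ≠ v → (G.Adj u v ↔ (P u ∩ P v).Nonempty)
  nc : ∀ u v, u ≠ v → NonCrossing T (P u) (P v)
  top_mem : ∀ v, e v ∈ P v
  top : ∀ v, ∀ x ∈ P v, Ancestor T r (e v) x
  conv : ∀ v, ∀ x ∈ P v, ∀ a, Ancestor T r (e v) a → Ancestor T r a x → a ∈ P v
  chain : ∀ v, ∀ x ∈ P v, ∀ y ∈ P v, Ancestor T r x y ∨ Ancestor T r y x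

namespace RootedModel

variable (M : RootedModel G T P r e) {u v w : V}

include M

/-- The deeper of the tops of two adjacent vertices lies on both paths. -/
theorem adj_cases (h : G.Adj u v) : e v ∈ P u ∨ e u ∈ P v := by
  obtain ⟨x, hxu, hxv⟩ := (M.adj u v h.ne).1 h
  rcases (M.top u x hxu).total M.tree (M.top v x hxv) with h | h
  · exact .inl (M.conv u x hxu _ h (M.top v x hxv))
  · exact .inr (M.conv v x hxv _ h (M.top u x hxu))

theorem adj_of_mem {x : β} (hne : u ≠ v) (hu : x ∈ P u) (hv : x ∈ P v) : G.Adj u v :=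
  (M.adj u v hne).2 ⟨x, hu, hv⟩

/-- If the top of `P u` is a node of `P v` but the top of `P v` is not on `P u`, then `P u`
contains all nodes of `P v` below its top. -/
theorem mem_of_top (hne : u ≠ v) (hu : e u ∈ P v) (hv : e v ∉ P u) {x : β}
    (hx : x ∈ P v) (hux : Ancestor T r (e u) x) : x ∈ P u := by
  by_contra hxu
  have h := Ancestor.of_preconnected (a := e u) M.tree (M.nc u v hne).2
    (fun h => h.2 (M.top_mem u)) ⟨hx, hxu⟩ ⟨M.top_mem v, hv⟩ hux
  exact hv ((M.top v _ hu).antisymm M.tree h ▸ M.top_mem u)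

/-- Of two non-adjacent neighbours of `v`, one contains the top of `P v`. -/
theorem top_mem_or (hu : G.Adj v u) (hw : G.Adj v w) (hne : u ≠ w) (huw : ¬ G.Adj u w) :
    e v ∈ P u ∨ e v ∈ P w := by
  by_contra! hcon
  have h1 := (M.adj_cases hu).resolve_right hcon.1
  have h2 := (M.adj_cases hw).resolve_right hcon.2
  rcases M.chain v _ h1 _ h2 with h | h
  · exact huw (M.adj_of_mem hne (M.mem_of_top hu.ne' h1 hcon.1 h2 h) (M.top_mem w))
  · exact huw (M.adj_of_mem hne (M.top_mem u) (M.mem_of_top hw.ne' h2 hcon.2 h1 h))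

theorem clawFree : ClawFree G := by
  rintro ⟨f⟩
  have h : ∀ i j, G.Adj (f i) (f j) ↔ claw.Adj i j := fun i j => f.map_adj_iff
  have hne : ∀ i j, i ≠ j → f i ≠ f j := fun i j hij hf => hij (f.injective hf)
  have key : ∀ i j : Fin 4, i ≠ 0 → j ≠ 0 → i ≠ j →
      (e (f 0) ∈ P (f i) ∨ e (f 0) ∈ P (f j)) ∧ ¬ (e (f 0) ∈ P (f i) ∧ e (f 0) ∈ P (f j)) := by
    intro i j hi hj hij
    have hij' : ¬ G.Adj (f i) (f j) := by rw [h]; simp [claw, hi, hj]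
    refine ⟨M.top_mem_or ?_ ?_ (hne i j hij) hij',
      fun hh => hij' (M.adj_of_mem (hne i j hij) hh.1 hh.2)⟩
    · rw [h]; simp [claw, hi.symm]
    · rw [h]; simp [claw, hj.symm]
  have h12 := key 1 2 (by decide) (by decide) (by decide)
  have h13 := key 1 3 (by decide) (by decide) (by decide)
  have h23 := key 2 3 (by decide) (by decide) (by decide)
  tauto

theorem top_mem_of_le (h : G.Adj u v) (hd : T.dist (e v) r ≤ T.dist (e u) r) : e u ∈ P v := by
  rcases M.adj_cases h with h' | h'
  · have ha := M.top u _ h'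
    by_cases he : e u = e v
    · exact he ▸ M.top_mem v
    · have := ha.dist_lt M.tree he
      omega
  · exact h'

theorem not_threeSun : ¬ Nonempty (threeSun ↪g G) := by
  rintro ⟨f⟩
  have h : ∀ i j, G.Adj (f i) (f j) ↔ threeSun.Adj i j := fun i j => f.map_adj_iff
  -- `c` is the triangle vertex with the deepest top, `u` and `w` are its two neighbours outside
  have key : ∀ c c' c'' u w : Fin 6, threeSun.Adj c c' → threeSun.Adj c c'' →
      threeSun.Adj c u → threeSun.Adj c w → u ≠ w → ¬ threeSun.Adj u w →
      u ≠ c' → ¬ threeSun.Adj u c' → w ≠ c'' → ¬ threeSun.Adj w c'' →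
      T.dist (e (f c')) r ≤ T.dist (e (f c)) r → T.dist (e (f c'')) r ≤ T.dist (e (f c)) r →
      False := by
    intro c c' c'' u w h1 h2 h3 h4 h5 h6 h7 h8 h9 h10 h11 h12
    have hc' := M.top_mem_of_le ((h c c').2 h1) h11
    have hc'' := M.top_mem_of_le ((h c c'').2 h2) h12
    rcases M.top_mem_or ((h c u).2 h3) ((h c w).2 h4) (f.injective.ne h5)
      (fun hh => h6 ((h u w).1 hh)) with hh | hh
    · exact h8 ((h u c').1 (M.adj_of_mem (f.injective.ne h7) hh hc'))
    · exact h10 ((h w c'').1 (M.adj_of_mem (f.injective.ne h9) hh hc''))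
  have k0 := key 0 1 2 5 3 (by simp [threeSun]) (by simp [threeSun]) (by simp [threeSun])
    (by simp [threeSun]) (by decide) (by simp [threeSun]) (by decide) (by simp [threeSun])
    (by decide) (by simp [threeSun])
  have k1 := key 1 0 2 4 3 (by simp [threeSun]) (by simp [threeSun]) (by simp [threeSun])
    (by simp [threeSun]) (by decide) (by simp [threeSun]) (by decide) (by simp [threeSun])
    (by decide) (by simp [threeSun])
  have k2 := key 2 0 1 4 5 (by simp [threeSun]) (by simp [threeSun]) (by simp [threeSun])
    (by simp [threeSun]) (by decide) (by simp [threeSun]) (by decide) (by simp [threeSun])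
    (by decide) (by simp [threeSun])
  by_contra
  by_cases h0 : T.dist (e (f 1)) r ≤ T.dist (e (f 0)) r ∧ T.dist (e (f 2)) r ≤ T.dist (e (f 0)) r
  · exact k0 h0.1 h0.2
  by_cases h1 : T.dist (e (f 0)) r ≤ T.dist (e (f 1)) r ∧ T.dist (e (f 2)) r ≤ T.dist (e (f 1)) r
  · exact k1 h1.1 h1.2
  · exact k2 (by omega) (by omega)

theorem chordal : Chordal G := by
  rintro n hn ⟨f⟩
  obtain ⟨k, rfl⟩ : ∃ k, n = k + 4 := ⟨n - 4, by omega⟩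
  have h : ∀ i j, G.Adj (f i) (f j) ↔ _ := fun i j => f.map_adj_iff
  obtain ⟨i, hi⟩ := Finite.exists_max (fun i => T.dist (e (f i)) r)
  have h0 : (2 : Fin (k + 4)) ≠ 0 := by simp [Fin.ext_iff, Nat.mod_eq_of_lt]
  have h1 : (2 : Fin (k + 4)) ≠ 1 := by simp [Fin.ext_iff, Nat.mod_eq_of_lt]
  have h3 : (3 : Fin (k + 4)) ≠ 0 := by simp [Fin.ext_iff, Nat.mod_eq_of_lt]
  -- both neighbours of the vertex with the deepest top contain that top
  have ha := M.top_mem_of_le ((h i (i + 1)).2 (by simp [cycleGraph_adj])) (hi _)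
  have hb := M.top_mem_of_le ((h i (i - 1)).2 (by simp [cycleGraph_adj])) (hi _)
  have e0 : (2 : Fin (k + 4)) = 1 + 1 := by simp [Fin.ext_iff, Fin.val_add, Nat.mod_eq_of_lt]
  have e3 : (3 : Fin (k + 4)) = 2 + 1 := by simp [Fin.ext_iff, Fin.val_add, Nat.mod_eq_of_lt]
  have e1 : (i + 1) - (i - 1) = 2 := by rw [e0]; abel
  have e2 : (i - 1) - (i + 1) = -2 := by rw [e0]; abel
  have hne : i + 1 ≠ i - 1 := fun hh => h0 (by rw [← e1, hh, sub_self])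
  have hadj := (h _ _).1 (M.adj_of_mem (f.injective.ne hne) ha hb)
  rw [cycleGraph_adj, e1, e2] at hadj
  rcases hadj with hh | hh
  · exact h1 hh
  · apply h3
    rw [e3, ← hh]
    abel

end RootedModel

end Model

/-! ### Rooted trees given by a parent map -/

/-- `par` sends every node to its parent in a tree with root `z`; the injective rank `h`
decreases towards the root, and the root is its own parent. -/
structure IsParentMap {β : Type*} (par : β → β) (h : β → ℕ) (z : β) : Prop where
  inj : Function.Injective h
  root : par z = z
  lt : ∀ x, x ≠ z → h (par x) < h x
  root_le : ∀ x, h z ≤ h x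

/-- The tree with parent map `par`. -/
def parentTree {β : Type*} (par : β → β) : SimpleGraph β :=
  SimpleGraph.fromRel (fun x y => par x = y)

/-- A node set such that, of any two of its nodes, the one of larger rank has its parent in the
set, with rank at least that of the other node. Such a set is a segment of a branch of the tree. -/
def IsSegment {β : Type*} (par : β → β) (h : β → ℕ) (S : Set β) : Prop :=
  ∀ x ∈ S, ∀ y ∈ S, h y < h x → par x ∈ S ∧ h y ≤ h (par x)

namespace IsParentMap

variable {β : Type*} {par : β → β} {h : β → ℕ} {z : β} (M : IsParentMap par h z)

theorem adj_iff {x y : β} : (parentTree par).Adj x y ↔ x ≠ y ∧ (par x = y ∨ par y = x) :=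
  SimpleGraph.fromRel_adj _ _ _

theorem adj_par {x : β} (hx : h (par x) < h x) : (parentTree par).Adj x (par x) :=
  adj_iff.2 ⟨fun hh => by rw [← hh] at hx; exact lt_irrefl _ hx, .inl rfl⟩

include M

theorem lt_of_lt {x y : β} (hxy : h y < h x) : h (par x) < h x := by
  apply M.lt
  rintro rfl
  exact absurd (M.root_le y) (by omega)

theorem connected : (parentTree par).Connected := by
  have key : ∀ n x, h x = n → (parentTree par).Reachable x z := by
    intro n
    induction n using Nat.strong_induction_on with
    | _ n ih =>
      rintro x rfl
      by_cases hx : x = z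
      · rw [hx]
      · exact (adj_par (M.lt x hx)).reachable.trans (ih _ (M.lt x hx) _ rfl)
  have : Nonempty β := ⟨z⟩
  exact ⟨fun x y => (key _ x rfl).trans (key _ y rfl).symm⟩

theorem isTree [Finite β] : (parentTree par).IsTree := by
  refine isTree_iff_connected_and_card.2 ⟨M.connected, ?_⟩
  apply le_antisymm _ M.connected.card_vert_le_card_edgeSet_add_one
  -- every edge joins a node other than the root to its parent
  have hsub : (parentTree par).edgeSet ⊆ (fun x => s(x, par x)) '' {x | x ≠ z} := by
    intro e
    induction e with
    | _ x y =>
      rintro (hxy : (parentTree par).Adj x y)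
      rw [adj_iff] at hxy
      obtain ⟨hne, rfl | rfl⟩ := hxy
      · exact ⟨x, fun hx => hne (by rw [hx, M.root]), rfl⟩
      · exact ⟨y, fun hy => hne (by rw [hy, M.root]), Sym2.eq_swap⟩
  have h1 := (Set.ncard_le_ncard hsub (Set.toFinite _)).trans (Set.ncard_image_le (Set.toFinite _))
  have h2 : ({z}ᶜ : Set β).ncard + 1 = Nat.card β := by
    have := Set.ncard_add_ncard_compl ({z} : Set β)
    rw [Set.ncard_singleton] at this
    omega
  have h3 : {x | x ≠ z} = ({z}ᶜ : Set β) := rfl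
  rw [h3] at h1
  rw [← h2, Nat.card_coe_set_eq]
  omega

theorem ancestor {a x : β} (hax : ∃ k, par^[k] x = a) : Ancestor (parentTree par) z a x := by
  intro w hw
  clear hw
  revert hax
  induction w with
  | nil =>
    rintro ⟨k, rfl⟩
    simp [Function.iterate_fixed M.root]
  | @cons u v _ huv p ih =>
    rintro ⟨k, hk⟩
    have ih := ih M
    rw [Walk.support_cons, List.mem_cons]
    rcases (adj_iff.1 huv).2 with hp | hp
    · cases k with
      | zero => exact .inl hk.symm
      | succ k => exact .inr (ih ⟨k, by rw [← hk, ← hp]; rfl⟩)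
    · exact .inr (ih ⟨k + 1, by rw [← hk, ← hp]; rfl⟩)

/-- In a segment the node of larger rank reaches any other one through parents. -/
theorem exists_iterate {S : Set β} (hS : IsSegment par h S) {x y : β} (hx : x ∈ S) (hy : y ∈ S)
    (hyx : h y ≤ h x) : ∃ k, par^[k] x = y := by
  induction hn : h x using Nat.strong_induction_on generalizing x with
  | _ n ih =>
    subst hn
    rcases hyx.eq_or_lt with he | hl
    · exact ⟨0, (M.inj he).symm⟩
    · obtain ⟨k, hk⟩ := ih _ (M.lt_of_lt hl) (hS x hx y hy hl).1 (hS x hx y hy hl).2 rfl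
      exact ⟨k + 1, hk⟩

theorem preconnected {S : Set β} (hS : IsSegment par h S) :
    ((parentTree par).induce S).Preconnected := by
  have key : ∀ n (x y : S), h x = n → h y ≤ h x →
      ((parentTree par).induce S).Reachable x y := by
    intro n
    induction n using Nat.strong_induction_on with
    | _ n ih =>
      rintro x y rfl hyx
      rcases hyx.eq_or_lt with he | hl
      · rw [Subtype.ext (M.inj he)]
      · obtain ⟨hp, hle⟩ := hS x x.2 y y.2 hl
        have hlt := M.lt_of_lt hl
        have hadj : ((parentTree par).induce S).Adj x ⟨_, hp⟩ := adj_par hlt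
        exact hadj.reachable.trans (ih _ hlt ⟨_, hp⟩ y rfl hle)
  intro x y
  rcases le_total (h x) (h y) with hle | hle
  · exact (key _ y x rfl hle).symm
  · exact key _ x y rfl hle

/-- A nonempty segment induces a path, and one of its endpoints is an ancestor of all its
nodes. -/
theorem path_of_segment [Finite β] {S : Set β} (hS : IsSegment par h S) (hne : S.Nonempty) :
    InducesPath (parentTree par) S ∧
      ∃ e, IsPathEnd (parentTree par) S e ∧ ∀ x ∈ S, Ancestor (parentTree par) z e x := by
  obtain ⟨b, hb, hbmax⟩ := S.exists_max_image h S.toFinite hne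
  obtain ⟨e, he, hemin⟩ := S.exists_min_image h S.toFinite hne
  have hex := M.exists_iterate hS hb he (hemin b hb)
  classical
  obtain ⟨m, hm, hmin⟩ : ∃ m, par^[m] b = e ∧ ∀ i < m, par^[i] b ≠ e :=
    ⟨Nat.find hex, Nat.find_spec hex, fun i hi => Nat.find_min hex hi⟩
  have hmem : ∀ i ≤ m, par^[i] b ∈ S ∧ (i < m → h (par^[i + 1] b) < h (par^[i] b)) := by
    have step : ∀ i < m, par^[i] b ∈ S →
        par^[i + 1] b ∈ S ∧ h (par^[i + 1] b) < h (par^[i] b) := by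
      intro i hi hiS
      have hlt : h e < h (par^[i] b) :=
        lt_of_le_of_ne (hemin _ hiS) fun hh => hmin i hi (M.inj hh).symm
      rw [Function.iterate_succ_apply']
      exact ⟨(hS _ hiS e he hlt).1, M.lt_of_lt hlt⟩
    have hin : ∀ i ≤ m, par^[i] b ∈ S := by
      intro i
      induction i with
      | zero => exact fun _ => hb
      | succ i ih => exact fun hi => (step i hi (ih (by omega))).1
    exact fun i hi => ⟨hin i hi, fun hi' => (step i hi' (hin i hi)).2⟩
  have hanti : ∀ i j, i < j → j ≤ m → h (par^[j] b) < h (par^[i] b) := by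
    intro i j hij
    induction j, hij using Nat.le_induction with
    | base => exact fun hj => (hmem i (by omega)).2 hj
    | succ j hj ih => exact fun hj' => ((hmem j (by omega)).2 hj').trans (ih (by omega))
  have hinj : ∀ i ≤ m, ∀ j ≤ m, par^[i] b = par^[j] b → i = j := by
    intro i hi j hj hij
    rcases lt_trichotomy i j with hl | hl | hl
    · have := hanti i j hl hj
      rw [hij] at this; omega
    · exact hl
    · have := hanti j i hl hi
      rw [hij] at this; omega
  have hcover : ∀ x ∈ S, ∃ i ≤ m, par^[i] b = x := by
    intro x hx
    obtain ⟨k, hk⟩ := M.exists_iterate hS hb hx (hbmax x hx)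
    by_cases hkm : k ≤ m
    · exact ⟨k, hkm, hk⟩
    -- iterating beyond `e` cannot yield a node other than `e`
    · refine ⟨m, le_rfl, M.inj (le_antisymm (hm ▸ hemin x hx) ?_)⟩
      have hle : ∀ l y, h (par^[l] y) ≤ h y := by
        intro l
        induction l with
        | zero => exact fun _ => le_rfl
        | succ l ih =>
          intro y
          refine (ih (par y)).trans ?_
          by_cases hy : y = z
          · rw [hy, M.root]
          · exact (M.lt y hy).le
      rw [← hk, show k = (k - m) + m by omega, Function.iterate_add_apply]
      exact hle _ _
  have hadj : ∀ i ≤ m, ∀ j ≤ m, (parentTree par).Adj (par^[i] b) (par^[j] b) ↔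
      (i + 1 = j ∨ j + 1 = i) := by
    have half : ∀ i ≤ m, ∀ j ≤ m, i ≠ j → par (par^[i] b) = par^[j] b → i + 1 = j := by
      intro i hi j hj hne hp
      rw [← Function.iterate_succ_apply' par i b] at hp
      by_cases him : i = m
      · have h1 := hanti j i (by omega) hi
        have h2 : h (par^[i + 1] b) ≤ h (par^[i] b) := by
          rw [Function.iterate_succ_apply']
          by_cases hz : par^[i] b = z
          · rw [hz, M.root]
          · exact (M.lt _ hz).le
        rw [hp] at h2
        omega
      · exact hinj _ (by omega) _ hj hp
    intro i hi j hj
    rw [adj_iff]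
    constructor
    · rintro ⟨hne, hp | hp⟩
      · exact .inl (half i hi j hj (fun hh => hne (by rw [hh])) hp)
      · exact .inr (half j hj i hi (fun hh => hne (by rw [hh])) hp)
    · rintro (rfl | rfl)
      · exact ⟨fun hh => absurd (hinj _ hi _ hj hh) (by omega),
          .inl (Function.iterate_succ_apply' ..).symm⟩
      · exact ⟨fun hh => absurd (hinj _ hi _ hj hh) (by omega),
          .inr (Function.iterate_succ_apply' ..).symm⟩
  refine ⟨⟨m, fun i => par^[i.val] b, ?_, ?_, ?_⟩, e, ⟨he, ?_⟩, ?_⟩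
  · exact fun i j hij => Fin.ext (hinj _ (by omega) _ (by omega) hij)
  · ext x
    constructor
    · rintro ⟨i, rfl⟩
      exact (hmem _ (by omega)).1
    · intro hx
      obtain ⟨i, hi, rfl⟩ := hcover x hx
      exact ⟨⟨i, by omega⟩, rfl⟩
  · exact fun i j => hadj _ (by omega) _ (by omega)
  · rintro x ⟨hx, hxe⟩ y ⟨hy, hye⟩
    obtain ⟨i, hi, rfl⟩ := hcover x hx
    obtain ⟨j, hj, rfl⟩ := hcover y hy
    rw [← hm, hadj m le_rfl _ (by omega)] at hxe hye
    rw [show i = j by omega]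
  · exact fun x hx => M.ancestor (M.exists_iterate hS hx he (hemin x hx))

end IsParentMap

/-! ### Chordal graphs -/

section Chordal

variable {V : Type*} {G : SimpleGraph V} {s t : V} {A B : Set V}

/-- `x 0 = s, …, x m = t` is a walk whose inner vertices lie in `A`. -/
def Through (G : SimpleGraph V) (s t : V) (A : Set V) (m : ℕ) (x : ℕ → V) : Prop :=
  x 0 = s ∧ x m = t ∧ (∀ i < m, G.Adj (x i) (x (i + 1))) ∧ ∀ i, 0 < i → i < m → x i ∈ A

/-- A shortest walk through `A` between distinct non-adjacent vertices is an induced path. -/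
theorem Through.exists_induced (hne : s ≠ t) (hst : ¬ G.Adj s t)
    (hex : ∃ m x, Through G s t A m x) :
    ∃ m x, Through G s t A m x ∧ 2 ≤ m ∧
      ∀ i j, i < j → j ≤ m → x i ≠ x j ∧ (G.Adj (x i) (x j) ↔ j = i + 1) := by
  classical
  obtain ⟨m, ⟨x, hx⟩, hmin⟩ : ∃ m, (∃ x, Through G s t A m x) ∧
      ∀ l < m, ¬ ∃ x, Through G s t A l x :=
    ⟨Nat.find hex, Nat.find_spec hex, fun i hi => Nat.find_min hex hi⟩
  refine ⟨m, x, hx, ?_, ?_⟩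
  · obtain ⟨h0, hm, hadj, -⟩ := hx
    by_contra! hlt
    interval_cases m
    · exact hne (h0.symm.trans hm)
    · exact hst (h0 ▸ hm ▸ hadj 0 (by omega))
  -- the shortcut that leaves out the `d` vertices after `x i`
  have cut : ∀ i d, 0 < d → i + d ≤ m → (i + d = m → x i = x (i + d)) →
      (i + d < m → G.Adj (x i) (x (i + d + 1))) → False := by
    obtain ⟨h0, hm, hadj, hA⟩ := hx
    intro i d hd hid h1 h2
    refine hmin (m - d) (by omega)
      ⟨fun k => if k ≤ i then x k else x (k + d), by simpa using h0, ?_, ?_, ?_⟩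
    · by_cases h : i + d = m
      · rw [← hm, show m - d = i by omega]
        simpa [← h] using h1 h
      · simp only [show ¬ (m - d ≤ i) by omega, if_false]
        rw [← hm]; congr 1; omega
    · intro k hk
      rcases lt_trichotomy k i with hki | rfl | hki
      · simp only [hki.le, Nat.succ_le_of_lt hki, if_true]
        exact hadj k (by omega)
      · simp only [le_refl, if_true, show ¬ (k + 1 ≤ k) by omega, if_false]
        rw [show k + 1 + d = k + d + 1 by omega]
        exact h2 (by omega)
      · simp only [show ¬ (k ≤ i) by omega, show ¬ (k + 1 ≤ i) by omega, if_false]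
        rw [show k + 1 + d = k + d + 1 by omega]
        exact hadj _ (by omega)
    · intro k hk hk'
      by_cases hki : k ≤ i
      · simp only [hki, if_true]
        exact hA k hk (by omega)
      · simp only [hki, if_false]
        exact hA _ (by omega) (by omega)
  intro i j hij hj
  refine ⟨fun he => cut i (j - i) (by omega) (by omega) ?_ ?_, fun ha => ?_, ?_⟩
  · rw [show i + (j - i) = j by omega]
    exact fun _ => he
  · rw [show i + (j - i) = j by omega, he]
    exact fun h => hx.2.2.1 j h
  · by_contra hji
    refine cut i (j - i - 1) (by omega) (by omega) (fun h => by omega) fun _ => ?_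
    rw [show i + (j - i - 1) + 1 = j by omega]
    exact ha
  · rintro rfl
    exact hx.2.2.1 i (by omega)

/-- A chordal graph has no sequence of at least four vertices forming an induced cycle. -/
theorem Chordal.no_cycle (hG : Chordal G) {n : ℕ} (hn : 4 ≤ n) (c : ℕ → V)
    (hc : ∀ i j, i < j → j < n →
      c i ≠ c j ∧ (G.Adj (c i) (c j) ↔ (j = i + 1 ∨ (i = 0 ∧ j + 1 = n)))) : False := by
  have hadj : ∀ i j : Fin n, i < j →
      (G.Adj (c i) (c j) ↔ (cycleGraph n).Adj i j) := by
    intro i j hij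
    rw [(hc i j hij j.2).2, cycleGraph_adj', Fin.coe_sub_iff_lt.2 hij, Fin.coe_sub_iff_le.2 hij.le]
    have := j.2
    have : i.val < j.val := hij
    omega
  refine hG n hn ⟨⟨⟨fun i => c i, ?_⟩, ?_⟩⟩
  · intro i j hij
    rcases lt_trichotomy i j with h | h | h
    · exact absurd hij (hc i j h j.2).1
    · exact h
    · exact absurd hij.symm (hc j i h i.2).1
  · intro i j
    show G.Adj (c i) (c j) ↔ _
    rcases lt_trichotomy i j with h | h | h
    · exact hadj i j h
    · subst h
      exact iff_of_false (G.loopless.irrefl _) ((cycleGraph n).loopless.irrefl _)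
    · rw [G.adj_comm, (cycleGraph n).adj_comm]
      exact hadj j i h

/-- Minimal separators of chordal graphs are cliques: if `s` and `t` are joined by walks through
two sets without edges between them, then `s` and `t` are adjacent. -/
theorem Chordal.adj_of_through (hG : Chordal G) (hne : s ≠ t)
    (hAB : ∀ a ∈ A, ∀ b ∈ B, a ≠ b ∧ ¬ G.Adj a b)
    (hA : ∃ m x, Through G s t A m x) (hB : ∃ m x, Through G s t B m x) : G.Adj s t := by
  by_contra hst
  obtain ⟨m, x, ⟨hx0, hxm, -, hxA⟩, hm, hx⟩ := Through.exists_induced hne hst hA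
  obtain ⟨l, y, ⟨hy0, hyl, -, hyB⟩, hl, hy⟩ := Through.exists_induced hne hst hB
  -- go from `s` to `t` through `A` and back through `B`
  refine hG.no_cycle (n := m + l) (by omega) (fun k => if k ≤ m then x k else y (m + l - k)) ?_
  intro i j hij hj
  by_cases hjm : j ≤ m
  · simp only [hjm, show i ≤ m by omega, if_true]
    refine ⟨(hx i j hij hjm).1, (hx i j hij hjm).2.trans ?_⟩
    omega
  simp only [hjm, if_false]
  by_cases him : i ≤ m
  · simp only [him, if_true]
    rcases Nat.eq_zero_or_pos i with rfl | hi
    · have := hy 0 (m + l - j) (by omega) (by omega)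
      rw [hx0, ← hy0]
      refine ⟨this.1, this.2.trans ?_⟩
      omega
    rcases him.eq_or_lt with rfl | him
    · have := hy (i + l - j) l (by omega) (by omega)
      rw [hxm, ← hyl, G.adj_comm]
      refine ⟨this.1.symm, this.2.trans ?_⟩
      omega
    · have := hAB _ (hxA i hi him) _ (hyB (m + l - j) (by omega) (by omega))
      refine ⟨this.1, iff_of_false this.2 ?_⟩
      omega
  · simp only [him, if_false]
    have := hy (m + l - j) (m + l - i) (by omega) (by omega)
    rw [G.adj_comm]
    refine ⟨this.1.symm, this.2.trans ?_⟩
    omega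

end Chordal

section Patterns

variable {V : Type*} {G : SimpleGraph V}

theorem ClawFree.elim (hG : ClawFree G) {c x y z : V} (hx : G.Adj c x) (hy : G.Adj c y)
    (hz : G.Adj c z) (hxy : x ≠ y) (hyz : y ≠ z) (hxz : x ≠ z) (nxy : ¬ G.Adj x y)
    (nyz : ¬ G.Adj y z) (nxz : ¬ G.Adj x z) : False := by
  refine hG ⟨⟨⟨![c, x, y, z], ?_⟩, ?_⟩⟩
  · intro i j
    have h1 := hx.ne
    have h2 := hy.ne
    have h3 := hz.ne
    fin_cases i <;> fin_cases j <;> simp_all [eq_comm]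
  · intro i j
    show G.Adj (![c, x, y, z] i) (![c, x, y, z] j) ↔ _
    fin_cases i <;> fin_cases j <;> simp_all [claw, G.adj_comm]

theorem threeSun_elim (hG : ¬ Nonempty (threeSun ↪g G)) {a b c u v w : V}
    (hab : G.Adj a b) (hbc : G.Adj b c) (hac : G.Adj a c)
    (hua : G.Adj u a) (hub : G.Adj u b) (huc : ¬ G.Adj u c)
    (hvb : G.Adj v b) (hvc : G.Adj v c) (hva : ¬ G.Adj v a)
    (hwc : G.Adj w c) (hwa : G.Adj w a) (hwb : ¬ G.Adj w b)
    (nuv : ¬ G.Adj u v) (nvw : ¬ G.Adj v w) (nuw : ¬ G.Adj u w) : False := by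
  have hadj : ∀ i j, G.Adj (![a, b, c, u, v, w] i) (![a, b, c, u, v, w] j) ↔ threeSun.Adj i j := by
    have huc' := G.adj_comm u c
    have hva' := G.adj_comm v a
    have hwb' := G.adj_comm w b
    have nuv' := G.adj_comm u v
    have nvw' := G.adj_comm v w
    have nuw' := G.adj_comm u w
    clear hG
    intro i j
    fin_cases i <;> fin_cases j <;>
      simp_all [threeSun, hab.symm, hbc.symm, hac.symm, hua.symm, hub.symm, hvb.symm, hvc.symm,
        hwc.symm, hwa.symm]
  refine hG ⟨⟨⟨![a, b, c, u, v, w], ?_⟩, hadj _ _⟩⟩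
  intro i j hij
  -- distinct vertices of the sun have distinct neighbourhoods
  have key : ∀ k, threeSun.Adj i k ↔ threeSun.Adj j k := fun k => by
    rw [← hadj, ← hadj, hij]
  clear hij hadj
  have key0 := key 0
  have key1 := key 1
  have key2 := key 2
  have key3 := key 3
  have key4 := key 4
  clear key hG
  fin_cases i <;> fin_cases j <;> simp_all [threeSun]

end Patterns

/-! ### Distance layers -/

section Layers

variable {V : Type*} {G : SimpleGraph V} {z : V} {d : V → ℕ}

/-- `d` has the properties of the distance from `z` that are used below. -/
structure IsLayering (G : SimpleGraph V) (z : V) (d : V → ℕ) : Prop where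
  zero : ∀ v, d v = 0 ↔ v = z
  adj_le : ∀ {u v}, G.Adj u v → d u ≤ d v + 1
  up : ∀ {v}, v ≠ z → ∃ u, G.Adj v u ∧ d u + 1 = d v

/-- `s` is a neighbour of `v` in the previous layer. -/
def LParent (G : SimpleGraph V) (d : V → ℕ) (v s : V) : Prop := G.Adj v s ∧ d s + 1 = d v

/-- `u` and `v` lie in the same layer and are equal or adjacent. -/
def Same (G : SimpleGraph V) (d : V → ℕ) (u v : V) : Prop := d u = d v ∧ (u = v ∨ G.Adj u v)

theorem Same.refl (G : SimpleGraph V) (d : V → ℕ) (u : V) : Same G d u u := ⟨rfl, .inl rfl⟩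

theorem Same.symm {u v : V} (h : Same G d u v) : Same G d v u :=
  ⟨h.1.symm, h.2.imp Eq.symm fun h => h.symm⟩

theorem isLayering_dist (hconn : G.Connected) (z : V) : IsLayering G z (fun v => G.dist v z) where
  zero v := hconn.dist_eq_zero_iff
  adj_le {u v} h := by
    have := hconn.dist_triangle (u := u) (v := v) (w := z)
    rw [dist_eq_one_iff_adj.2 h] at this
    omega
  up {v} hv := by
    obtain ⟨p, hp⟩ := hconn.exists_walk_length_eq_dist v z
    cases p with
    | nil => exact absurd rfl hv
    | @cons _ u _ h p =>
      refine ⟨u, h, ?_⟩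
      have h1 := dist_le p
      have h2 := hconn.dist_triangle (u := v) (v := u) (w := z)
      rw [dist_eq_one_iff_adj.2 h] at h2
      rw [Walk.length_cons] at hp
      omega

theorem exists_through_two {s a t : V} (h1 : G.Adj s a) (h2 : G.Adj a t) :
    ∃ m x, Through G s t {a} m x := by
  refine ⟨2, fun i => if i = 0 then s else if i = 1 then a else t, rfl, rfl, ?_, ?_⟩
  · intro i hi
    interval_cases i
    · exact h1
    · exact h2
  · intro i hi hi'
    interval_cases i
    rfl

theorem exists_through_three {s a b t : V} (h1 : G.Adj s a) (h2 : G.Adj a b) (h3 : G.Adj b t) :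
    ∃ m x, Through G s t {a, b} m x := by
  refine ⟨3, fun i => if i = 0 then s else if i = 1 then a else if i = 2 then b else t,
    rfl, rfl, ?_, ?_⟩
  · intro i hi
    interval_cases i
    · exact h1
    · exact h2
    · exact h3
  · intro i hi hi'
    interval_cases i
    · exact .inl rfl
    · exact .inr rfl

/-- A 4-cycle in a chordal graph has a chord. -/
theorem Chordal.chord (hC : Chordal G) {a b c e : V} (hab : G.Adj a b) (hbc : G.Adj b c)
    (hce : G.Adj c e) (hea : G.Adj e a) (hac : a ≠ c) (hbe : b ≠ e) :
    G.Adj a c ∨ G.Adj b e := by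
  by_contra! hcon
  refine hcon.1 (hC.adj_of_through hac (A := {b}) (B := {e}) ?_ (exists_through_two hab hbc)
    (exists_through_two hea.symm hce.symm))
  rintro _ rfl _ rfl
  exact ⟨hbe, hcon.2⟩

/-- Of two nested parent sets the smaller is contained in the larger. -/
theorem LParent.of_ncard_le [Finite V] {u v s : V}
    (hnest : ∀ s t, LParent G d u s → LParent G d v t → LParent G d v s ∨ LParent G d u t)
    (hcard : {s | LParent G d u s}.ncard ≤ {s | LParent G d v s}.ncard) (hu : LParent G d u s) :
    LParent G d v s := by
  by_contra hv
  have hss : {s | LParent G d v s} ⊂ {s | LParent G d u s} :=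
    ⟨fun t ht => (hnest s t hu ht).resolve_left hv, fun h => hv (h hu)⟩
  have := Set.ncard_lt_ncard hss
  omega

namespace IsLayering

variable (L : IsLayering G z d) {u v w s t : V}

include L

/-- Two vertices of one layer are joined through the layers above. -/
theorem exists_through_up (hd : d s = d t) (hpos : 0 < d s) :
    ∃ m x, Through G s t {v | d v < d s} m x := by
  have hup : ∀ v, ∃ u, v ≠ z → G.Adj v u ∧ d u + 1 = d v := by
    intro v
    by_cases hv : v = z
    · exact ⟨v, fun h => absurd hv h⟩
    · obtain ⟨u, hu⟩ := L.up hv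
      exact ⟨u, fun _ => hu⟩
  choose up hup using hup
  have hne : ∀ v, 0 < d v → v ≠ z := by
    rintro v hv rfl
    exact absurd ((L.zero v).2 rfl) (by omega)
  have hit : ∀ v i, i ≤ d v → d (up^[i] v) = d v - i := by
    intro v i
    induction i with
    | zero => exact fun _ => rfl
    | succ i ih =>
      intro hi
      have h1 := ih (by omega)
      have := (hup _ (hne (up^[i] v) (by omega))).2
      rw [Function.iterate_succ_apply']
      omega
  have hadj : ∀ v i, i < d v → G.Adj (up^[i] v) (up^[i + 1] v) := by
    intro v i hi
    rw [Function.iterate_succ_apply']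
    exact (hup _ (hne _ (by rw [hit v i (by omega)]; omega))).1
  have hroot : up^[d s] s = up^[d s] t := by
    rw [(L.zero (up^[d s] s)).1 (by rw [hit _ _ le_rfl]; omega),
      (L.zero (up^[d s] t)).1 (by rw [hit _ _ hd.le]; omega)]
  refine ⟨2 * d s, fun i => if i ≤ d s then up^[i] s else up^[2 * d s - i] t, by simp, ?_, ?_, ?_⟩
  · simp [show ¬ (2 * d s ≤ d s) by omega]
  · intro i hi
    rcases lt_trichotomy i (d s) with h | h | h
    · simp only [h.le, Nat.succ_le_of_lt h, if_true]
      exact hadj s i h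
    · simp only [h.le, show ¬ (i + 1 ≤ d s) by omega, if_true, if_false]
      rw [h, hroot]
      have := hadj t (d s - 1) (by omega)
      rw [show d s - 1 + 1 = d s by omega] at this
      rw [show 2 * d s - (d s + 1) = d s - 1 by omega]
      exact this.symm
    · simp only [show ¬ (i ≤ d s) by omega, show ¬ (i + 1 ≤ d s) by omega, if_false]
      have := hadj t (2 * d s - (i + 1)) (by omega)
      rw [show 2 * d s - (i + 1) + 1 = 2 * d s - i by omega] at this
      exact this.symm
  · intro i hi hi'
    show d _ < d s
    by_cases h : i ≤ d s
    · simp only [h, if_true]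
      rw [hit _ _ h]; omega
    · simp only [h, if_false]
      rw [hit _ _ (by omega)]; omega

/-- Parents of equal or adjacent vertices of one layer are equal or adjacent. -/
theorem same_parents (hC : Chordal G) (h : Same G d u v) (hu : LParent G d u s)
    (hv : LParent G d v t) : Same G d s t := by
  have hd : d s = d t := by have := hu.2; have := hv.2; have := h.1; omega
  refine ⟨hd, ?_⟩
  by_cases hne : s = t
  · exact .inl hne
  right
  have hpos : 0 < d s := by
    rw [Nat.pos_iff_ne_zero]
    intro h0
    exact hne (((L.zero s).1 h0).trans ((L.zero t).1 (hd ▸ h0)).symm)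
  obtain ⟨A, hA, hthr⟩ : ∃ A : Set V, (∀ a ∈ A, d a = d s + 1) ∧ ∃ m x, Through G s t A m x := by
    rcases h.2 with rfl | hadj
    · exact ⟨_, by rintro _ rfl; exact hu.2.symm, exists_through_two hu.1.symm hv.1⟩
    · refine ⟨_, ?_, exists_through_three hu.1.symm hadj hv.1⟩
      rintro _ (rfl | rfl)
      · exact hu.2.symm
      · exact hd ▸ hv.2.symm
  refine hC.adj_of_through hne ?_ hthr (L.exists_through_up hd hpos)
  intro a ha b (hb : d b < d s)
  have hda := hA a ha
  exact ⟨by rintro rfl; omega, fun hab => by have := L.adj_le hab; omega⟩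

/-- The parent sets of equal or adjacent vertices of one layer are nested. -/
theorem nested (hC : Chordal G) (h : Same G d u v) (hu : LParent G d u s)
    (hv : LParent G d v t) : LParent G d v s ∨ LParent G d u t := by
  have hst := L.same_parents hC h hu hv
  have h1 := hu.2
  have h2 := hv.2
  have h3 := h.1
  rcases h.2 with rfl | huv
  · exact .inl hu
  rcases hst.2 with rfl | hadj
  · exact .inr hu
  rcases hC.chord hu.1.symm huv hv.1 hadj.symm (by rintro rfl; omega) (by rintro rfl; omega)
    with h | h
  · exact .inl ⟨h.symm, by omega⟩
  · exact .inr ⟨h, by omega⟩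

theorem common_parent (hC : Chordal G) (h : Same G d u v) (hne : u ≠ z) :
    ∃ s, LParent G d u s ∧ LParent G d v s := by
  have hv : v ≠ z := by
    rintro rfl
    exact hne ((L.zero u).1 (h.1.trans ((L.zero v).2 rfl)))
  obtain ⟨s, hs⟩ := L.up hne
  obtain ⟨t, ht⟩ := L.up hv
  rcases L.nested hC h hs ht with h' | h'
  · exact ⟨s, hs, h'⟩
  · exact ⟨t, h', ht⟩

theorem not_adj {u v : V} (h : d u + 1 < d v) : ¬ G.Adj u v := fun hh => by
  have := L.adj_le hh.symm
  omega

/-- The children of a vertex other than the root form a clique. -/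
theorem same_children (hK : ClawFree G) (hs : s ≠ z) (hu : LParent G d u s)
    (hv : LParent G d v s) : Same G d u v := by
  have h1 := hu.2
  have h2 := hv.2
  refine ⟨by omega, ?_⟩
  by_contra! hcon
  obtain ⟨p, hp, hdp⟩ := L.up hs
  exact hK.elim hp hu.1.symm hv.1.symm (by rintro rfl; omega) hcon.1 (by rintro rfl; omega)
    (L.not_adj (by omega)) hcon.2 (L.not_adj (by omega))

/-- A vertex with a parent that is not a parent of its neighbour `v` has all its children in
common with `v`. -/
theorem children_subset (hK : ClawFree G) (h : Same G d u v) (hu : LParent G d u s)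
    (hv : ¬ LParent G d v s) (hw : LParent G d w u) : LParent G d w v := by
  have h1 := hu.2
  have h2 := hw.2
  have h3 := h.1
  rcases h.2 with rfl | huv
  · exact hw
  refine ⟨?_, by omega⟩
  by_contra hcon
  exact hK.elim hu.1 huv hw.1.symm (by rintro rfl; omega) (by rintro rfl; omega)
    (by rintro rfl; omega) (fun h => hv ⟨h.symm, by omega⟩) (fun h => hcon h.symm)
    (L.not_adj (by omega))

/-- From the second layer on, the components of the layers are cliques; a violation together with
common parents yields a 3-sun. -/
theorem same_trans (hC : Chordal G) (hK : ClawFree G) (hS : ¬ Nonempty (threeSun ↪g G))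
    (h2 : 2 ≤ d u) (huv : Same G d u v) (hvw : Same G d v w) : Same G d u w := by
  have hdu := huv.1
  have hdv := hvw.1
  have hroot : ∀ x, 0 < d x → x ≠ z := by
    rintro x hx rfl
    exact absurd ((L.zero x).2 rfl) (by omega)
  rcases huv.2 with rfl | auv
  · exact hvw
  rcases hvw.2 with rfl | avw
  · exact huv
  by_contra hcon
  have nuw : ¬ G.Adj u w := fun h => hcon ⟨by omega, .inr h⟩
  obtain ⟨s, hus, hvs⟩ := L.common_parent hC huv (hroot _ (by omega))
  obtain ⟨t, hvt, hwt⟩ := L.common_parent hC hvw (hroot _ (by omega))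
  have ds := hus.2
  have dt := hwt.2
  have nws : ¬ LParent G d w s := fun h => hcon (L.same_children hK (hroot _ (by omega)) hus h)
  have nut : ¬ LParent G d u t := fun h => hcon (L.same_children hK (hroot _ (by omega)) h hwt)
  have hst := L.same_parents hC (.refl G d v) hvs hvt
  have ast : G.Adj s t := hst.2.resolve_left (by rintro rfl; exact nws hwt)
  obtain ⟨p, hsp, htp⟩ := L.common_parent hC hst (hroot _ (by omega))
  have dp := hsp.2
  exact threeSun_elim hS (a := s) (b := v) (c := t) (u := u) (v := w) (w := p)
    hvs.1.symm hvt.1 ast hus.1 auv (fun h => nut ⟨h, by omega⟩) avw.symm hwt.1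
    (fun h => nws ⟨h, by omega⟩) htp.1.symm hsp.1.symm (L.not_adj (by omega)) nuw
    (fun h => L.not_adj (by omega) h.symm) (fun h => L.not_adj (by omega) h.symm)

end IsLayering

/-- A connected chordal claw-free graph without 3-sun has a vertex whose neighbourhood is a
clique: a vertex of the last layer with the fewest parents, for a suitable root. -/
theorem exists_simplicial [Finite V] (hconn : G.Connected) (hC : Chordal G) (hK : ClawFree G)
    (hS : ¬ Nonempty (threeSun ↪g G)) :
    ∃ z, ∀ x y, G.Adj z x → G.Adj z y → x = y ∨ G.Adj x y := by
  by_cases hecc : ∀ w v, G.dist v w ≤ 1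
  · obtain ⟨z⟩ := hconn.nonempty
    refine ⟨z, fun x y _ _ => ?_⟩
    have := hecc y x
    interval_cases h : G.dist x y
    · exact .inl (hconn.dist_eq_zero_iff.1 h)
    · exact .inr (dist_eq_one_iff_adj.1 h)
  push Not at hecc
  obtain ⟨w, v₀, hv₀⟩ := hecc
  have L := isLayering_dist hconn w
  set d : V → ℕ := fun v => G.dist v w with hd
  have : Nonempty V := ⟨w⟩
  obtain ⟨v₁, hv₁⟩ := Finite.exists_max d
  obtain ⟨v, hv, hvmin⟩ := Set.exists_min_image {v | d v = d v₁}
    (fun v => {s | LParent G d v s}.ncard) (Set.toFinite _) ⟨v₁, rfl⟩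
  have hv : d v = d v₁ := hv
  have h2 : 2 ≤ d v := by
    have := hv₁ v₀
    have : 1 < d v₀ := hv₀
    omega
  have hcases : ∀ x, G.Adj v x → Same G d v x ∨ LParent G d v x := by
    intro x hx
    have h1 := hv₁ x
    have h2 := L.adj_le hx
    by_cases h : d v = d x
    · exact .inl ⟨h, .inr hx⟩
    · exact .inr ⟨hx, by omega⟩
  have hmixed : ∀ x y, Same G d v x → LParent G d v y → G.Adj x y := by
    intro x y hx hy
    exact (LParent.of_ncard_le (fun s t => L.nested hC hx) (hvmin x (hx.1.symm.trans hv)) hy).1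
  refine ⟨v, fun x y hx hy => ?_⟩
  rcases hcases x hx with hx | hx <;> rcases hcases y hy with hy | hy
  · exact (L.same_trans hC hK hS (hx.1 ▸ h2) hx.symm hy).2
  · exact .inr (hmixed x y hx hy)
  · exact .inr (hmixed y x hy hx).symm
  · exact (L.same_parents hC (.refl G d v) hx hy).2

/-- The structure of the layers of a connected chordal claw-free 3-sun-free graph with respect to
a simplicial root: the components of the layers are cliques, and each parent and child set lies
in a single component. -/
structure CliqueLayering (G : SimpleGraph V) (z : V) (d : V → ℕ) : Prop extends
    IsLayering G z d where
  trans : ∀ {u v w}, Same G d u v → Same G d v w → Same G d u w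
  parents : ∀ {v s t}, LParent G d v s → LParent G d v t → Same G d s t
  children : ∀ {u v s}, LParent G d u s → LParent G d v s → Same G d u v
  nest : ∀ {u v s t}, Same G d u v → LParent G d u s → LParent G d v t →
    LParent G d v s ∨ LParent G d u t
  claw : ∀ {u v s w}, Same G d u v → LParent G d u s → ¬ LParent G d v s → LParent G d w u →
    LParent G d w v

theorem exists_cliqueLayering [Finite V] (hconn : G.Connected) (hC : Chordal G)
    (hK : ClawFree G) (hS : ¬ Nonempty (threeSun ↪g G)) : ∃ z d, CliqueLayering G z d := by
  obtain ⟨z, hz⟩ := exists_simplicial hconn hC hK hS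
  have L := isLayering_dist hconn z
  set d : V → ℕ := fun v => G.dist v z
  have hchild : ∀ {u v s}, LParent G d u s → LParent G d v s → Same G d u v := by
    intro u v s hu hv
    by_cases hs : s = z
    · subst hs
      exact ⟨by rw [← hu.2, ← hv.2], hz _ _ hu.1.symm hv.1.symm⟩
    · exact L.same_children hK hs hu hv
  refine ⟨z, d, { L with
    trans := ?_
    parents := fun hs ht => L.same_parents hC (.refl G d _) hs ht
    children := hchild
    nest := fun h hs ht => L.nested hC h hs ht
    claw := fun h hs hv hw => L.children_subset hK h hs hv hw }⟩
  intro u v w huv hvw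
  by_cases h2 : 2 ≤ d u
  · exact L.same_trans hC hK hS h2 huv hvw
  have hdw : d u = d w := huv.1.trans hvw.1
  by_cases hu : u = z
  · exact ⟨hdw, .inl (hu.trans ((L.zero w).1 (hdw ▸ (L.zero u).2 hu)).symm)⟩
  have hu0 : d u ≠ 0 := fun h => hu ((L.zero u).1 h)
  -- in the first layer the root is the parent of all vertices
  have hpar : ∀ x, d x = 1 → LParent G d x z := by
    intro x hx
    obtain ⟨s, hs, hd⟩ := L.up (v := x) (fun h => by rw [(L.zero x).2 h] at hx; omega)
    rw [← (L.zero s).1 (by omega)]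
    exact ⟨hs, hd⟩
  exact hchild (hpar u (by omega)) (hpar w (by omega))

/-! ### The model on the vertex set -/

/-- Every function into the natural numbers can be refined to an injective one. -/
theorem exists_injective_rank [Finite V] (key : V → ℕ) :
    ∃ rk : V → ℕ, Function.Injective rk ∧ ∀ u v, rk u ≤ rk v → key u ≤ key v := by
  obtain ⟨N, ⟨φ⟩⟩ := Finite.exists_equiv_fin V
  have hlt : ∀ u v, key u < key v → key u * N + φ u < key v * N + φ v := by
    intro u v huv
    have h1 := Nat.mul_le_mul_right N (Nat.succ_le_of_lt huv)
    rw [Nat.succ_mul] at h1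
    have := (φ u).2
    omega
  refine ⟨fun v => key v * N + φ v, fun u v huv => ?_, fun u v huv => ?_⟩
  · have huv : key u * N + φ u = key v * N + φ v := huv
    rcases lt_trichotomy (key u) (key v) with h | h | h
    · have := hlt u v h; omega
    · rw [h] at huv
      exact φ.injective (Fin.ext (by omega))
    · have := hlt v u h; omega
  · by_contra! h
    have := hlt v u h
    have huv : key u * N + φ u ≤ key v * N + φ v := huv
    omega

/-- `rk` orders the vertices by layers and, within a component of a layer, by decreasing parent
sets. -/
structure LayerRank (G : SimpleGraph V) (d rk : V → ℕ) : Prop where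
  inj : Function.Injective rk
  layer : ∀ {u v}, rk u ≤ rk v → d u ≤ d v
  parents : ∀ {u v s}, Same G d u v → rk u ≤ rk v → LParent G d v s → LParent G d u s

theorem CliqueLayering.exists_rank [Finite V] (L : CliqueLayering G z d) :
    ∃ rk, LayerRank G d rk := by
  set c : V → ℕ := fun v => {s | LParent G d v s}.ncard with hc
  set N := Nat.card V
  have hcN : ∀ v, c v ≤ N := fun v => Set.ncard_le_card _
  obtain ⟨rk, hinj, hrk⟩ := exists_injective_rank (fun v => d v * (N + 1) + (N - c v))
  refine ⟨rk, hinj, ?_, ?_⟩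
  · intro u v h
    have h1 := hrk u v h
    by_contra! hlt
    have h2 := Nat.mul_le_mul_right (N + 1) (Nat.succ_le_of_lt hlt)
    rw [Nat.succ_mul] at h2
    omega
  · intro u v s huv h hs
    have h1 := hrk u v h
    have := hcN u
    have := hcN v
    rw [huv.1] at h1
    exact LParent.of_ncard_le (fun s t => L.nest huv.symm) (show c v ≤ c u by omega) hs

/-- `y` precedes `x` and lies in the component of `x` or in the component of the parents
of `x`. The parent of `x` in the tree is the last such `y`. -/
def Precedes (G : SimpleGraph V) (d rk : V → ℕ) (x y : V) : Prop :=
  rk y < rk x ∧ (Same G d x y ∨ ∃ s, LParent G d x s ∧ Same G d s y)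

/-- The node set assigned to `v`: the members of the component of `v` whose parents are all
parents of `v`, and the children of `v`. -/
def modelPath (G : SimpleGraph V) (d : V → ℕ) (v : V) : Set V :=
  {x | (Same G d v x ∧ ∀ s, LParent G d x s → LParent G d v s) ∨ LParent G d x v}

/-- `par` is a parent map choosing for each vertex the last vertex preceding it. -/
structure ModelMap (G : SimpleGraph V) (z : V) (d rk : V → ℕ) (par : V → V) : Prop extends
    IsParentMap par rk z where
  prec : ∀ {x y}, Precedes G d rk x y → Precedes G d rk x (par x)
  last : ∀ {x y}, Precedes G d rk x y → rk y ≤ rk (par x)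

theorem LayerRank.exists_modelMap [Finite V] {rk : V → ℕ} (R : LayerRank G d rk)
    (L : CliqueLayering G z d) : ∃ par, ModelMap G z d rk par := by
  classical
  have hz : ∀ x, rk z ≤ rk x := by
    intro x
    by_contra! h
    have h1 := R.layer h.le
    rw [(L.zero z).2 rfl] at h1
    rw [(L.zero x).1 (by omega)] at h
    exact lt_irrefl _ h
  have hne : ∀ x, x ≠ z → ∃ y, Precedes G d rk x y := by
    intro x hx
    obtain ⟨s, hs⟩ := L.up hx
    refine ⟨s, ?_, .inr ⟨s, hs, .refl G d s⟩⟩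
    by_contra! h
    have := R.layer h
    have := hs.2
    omega
  have hex : ∀ x, ∃ p, (x = z → p = z) ∧
      (x ≠ z → Precedes G d rk x p ∧ ∀ y, Precedes G d rk x y → rk y ≤ rk p) := by
    intro x
    by_cases hx : x = z
    · exact ⟨z, fun _ => rfl, fun h => absurd hx h⟩
    · obtain ⟨p, hp, hmax⟩ := Set.exists_max_image {y | Precedes G d rk x y} rk (Set.toFinite _)
        (hne x hx)
      exact ⟨p, fun h => absurd h hx, fun _ => ⟨hp, hmax⟩⟩
  choose par hpar using hex
  have hxz : ∀ {x y}, Precedes G d rk x y → x ≠ z := by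
    rintro x y h rfl
    have := hz y
    have := h.1
    omega
  exact ⟨par, ⟨R.inj, (hpar z).1 rfl, fun x hx => ((hpar x).2 hx).1.1, hz⟩,
    fun h => ((hpar _).2 (hxz h)).1, fun h => ((hpar _).2 (hxz h)).2 _ h⟩

theorem Same.adj {u v : V} (h : Same G d u v) (hne : u ≠ v) : G.Adj u v := h.2.resolve_left hne

namespace CliqueLayering

variable (L : CliqueLayering G z d) {u v x y : V}

include L

/-- Two vertices are adjacent exactly when their node sets meet. -/
theorem adj_iff (hne : u ≠ v) :
    G.Adj u v ↔ (modelPath G d u ∩ modelPath G d v).Nonempty := by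
  constructor
  · intro h
    have h1 := L.adj_le h
    have h2 := L.adj_le h.symm
    have hself : ∀ w, w ∈ modelPath G d w := fun w => .inl ⟨.refl G d w, fun _ h => h⟩
    rcases lt_trichotomy (d u) (d v) with hd | hd | hd
    · exact ⟨v, .inr ⟨h.symm, by omega⟩, hself v⟩
    · have huv : Same G d u v := ⟨hd, .inr h⟩
      by_cases hsub : ∀ s, LParent G d v s → LParent G d u s
      · exact ⟨v, .inl ⟨huv, hsub⟩, hself v⟩
      · push Not at hsub
        obtain ⟨t, ht, hut⟩ := hsub
        exact ⟨u, hself u, .inl ⟨huv.symm, fun s hs => (L.nest huv hs ht).resolve_right hut⟩⟩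
    · exact ⟨u, hself u, .inr ⟨h, by omega⟩⟩
  · rintro ⟨x, ⟨hu, hpu⟩ | hu, ⟨hv, hpv⟩ | hv⟩
    · exact (L.trans hu hv.symm).adj hne
    · exact (hpu _ hv).1
    · exact (hpv _ hu).1.symm
    · exact (L.parents hu hv).adj hne

variable {rk : V → ℕ} {par : V → V} (R : LayerRank G d rk) (M : ModelMap G z d rk par)

include R in
/-- The node sets of the model are chains for the relation of preceding. -/
theorem precedes (hx : x ∈ modelPath G d v) (hy : y ∈ modelPath G d v) (h : rk y < rk x) :
    Precedes G d rk x y := by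
  refine ⟨h, ?_⟩
  rcases hx with ⟨hx, -⟩ | hx <;> rcases hy with ⟨hy, -⟩ | hy
  · exact .inl (L.trans hx.symm hy)
  · have := R.layer h.le
    have := hx.1
    have := hy.2
    omega
  · exact .inr ⟨v, hx, hy⟩
  · exact .inl (L.children hx hy)

include R M

/-- The node sets of the model are vertical paths: the last vertex preceding `x ∈ modelPath G d v` belongs
to this set as soon as some member of it is ranked before `x`. -/
theorem isSegment (v : V) : IsSegment par rk (modelPath G d v) := by
  intro x hx y hy h
  have hprec := L.precedes R hx hy h
  have hle := M.last hprec
  have hp := M.prec hprec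
  refine ⟨?_, hle⟩
  set p := par x
  -- since `p` is not ranked before `y`, its parents are parents of `y` and hence of `v`
  have key : Same G d v p → p ∈ modelPath G d v := by
    intro hvp
    rcases hy with ⟨hy, hpar⟩ | hy
    · exact .inl ⟨hvp, fun s hs => hpar s (R.parents (L.trans hy.symm hvp) hle hs)⟩
    · have := R.layer hle
      have := hvp.1
      have := hy.2
      omega
  rcases hx with ⟨hx, hpx⟩ | hx
  · apply key
    rcases hp.2 with hxp | ⟨s, hs, hsp⟩
    · exact L.trans hx hxp
    · have h1 := R.layer hle
      have h2 := hs.2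
      have h3 := hsp.1
      have h4 := hx.1
      rcases hy with ⟨hy, -⟩ | hy
      · have := hy.1
        omega
      · have := hy.2
        omega
  · rcases hp.2 with hxp | ⟨s, hs, hsp⟩
    · exact .inr (R.parents hxp.symm hp.1.le hx)
    · exact key (L.trans (L.parents hx hs) hsp)

/-- The parts of the node sets outside one another are segments, that is, the model is
non-crossing. -/
theorem isSegment_diff (u v : V) :
    IsSegment par rk (modelPath G d u \ modelPath G d v) := by
  rintro x ⟨hxu, hxv⟩ y ⟨hyu, hyv⟩ h
  obtain ⟨hpu, hle⟩ := L.isSegment R M u x hxu y hyu h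
  have hlt : rk (par x) < rk x := (M.prec (L.precedes R hxu hyu h)).1
  refine ⟨⟨hpu, fun hpv => ?_⟩, hle⟩
  set p := par x
  have hdx := R.layer hlt.le
  have hdy := R.layer hle
  rcases hpv with ⟨hpv, hsub⟩ | hpv
  -- `p` lies in the component of `v`; a contradiction arises once `x` does so as well
  · have key : ¬ Same G d p x := fun hpx =>
      hxv (.inl ⟨L.trans hpv hpx, fun s hs => hsub s (R.parents hpx hlt.le hs)⟩)
    rcases hpu with ⟨hpu, -⟩ | hpu
    · have huv' := L.trans hpu hpv.symm
      rcases hxu with ⟨hxu, -⟩ | hxu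
      · exact key (L.trans hpu.symm hxu)
      · rcases hyu with ⟨hyu, hyp⟩ | hyu
        · have : ∃ s, LParent G d y s ∧ ¬ LParent G d v s := by
            by_contra! hcon
            exact hyv (.inl ⟨L.trans huv'.symm hyu, hcon⟩)
          obtain ⟨s, hs, hvs⟩ := this
          exact hxv (.inr (L.claw huv' (hyp s hs) hvs hxu))
        · have := hyu.2
          have := hpu.1
          omega
    · rcases hxu with ⟨hxu, -⟩ | hxu
      · have := hpu.2
        have := hxu.1
        omega
      · exact key (L.children hpu hxu)
  -- `p` is a child of `v`; a contradiction arises once `y` lies in the component of `p`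
  · have key : ¬ Same G d y p := fun hyp => hyv (.inr (R.parents hyp hle hpv))
    rcases hpu with ⟨hpu, -⟩ | hpu
    · rcases hyu with ⟨hyu, -⟩ | hyu
      · exact key (L.trans hyu.symm hpu)
      · have := hyu.2
        have := hpu.1
        omega
    · rcases hyu with ⟨hyu, hyp⟩ | hyu
      · have huv' := L.parents hpu hpv
        have : ∃ s, LParent G d y s ∧ ¬ LParent G d v s := by
          by_contra! hcon
          exact hyv (.inl ⟨L.trans huv'.symm hyu, hcon⟩)
        obtain ⟨s, hs, hvs⟩ := this
        rcases hxu with ⟨hxu, -⟩ | hxu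
        · have := hpu.2
          have := hxu.1
          omega
        · exact hxv (.inr (L.claw huv' (hyp s hs) hvs hxu))
      · exact key (L.children hyu hpu)

end CliqueLayering

theorem exists_model [Finite V] (hconn : G.Connected) (hC : Chordal G)
    (hK : ClawFree G) (hS : ¬ Nonempty (threeSun ↪g G)) :
    ∃ (T : SimpleGraph V) (P : V → Set V) (r : V),
      T.IsTree ∧
      (∀ v : V, InducesPath T (P v)) ∧
      (∀ u v : V, u ≠ v → (G.Adj u v ↔ (P u ∩ P v).Nonempty)) ∧
      (∀ u v : V, u ≠ v → NonCrossing T (P u) (P v)) ∧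
      (∀ v : V, ∃ e : V, IsPathEnd T (P v) e ∧ ∀ x ∈ P v, Ancestor T r e x) := by
  obtain ⟨z, d, L⟩ := exists_cliqueLayering hconn hC hK hS
  obtain ⟨rk, R⟩ := L.exists_rank
  obtain ⟨par, M⟩ := R.exists_modelMap L
  have hpath := fun v => M.path_of_segment (L.isSegment R M v)
    ⟨v, .inl ⟨.refl G d v, fun _ h => h⟩⟩
  exact ⟨parentTree par, modelPath G d, z, M.isTree, fun v => (hpath v).1, fun u v => L.adj_iff,
    fun u v _ => ⟨M.preconnected (L.isSegment_diff R M u v),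
      M.preconnected (L.isSegment_diff R M v u)⟩, fun v => (hpath v).2⟩

end Layers

/-- a finite connected graph is chordal, claw-free and 3-sun-free
iff it has an NC-path-r.tree model. -/
theorem stmt_10 {V : Type*} [Fintype V] (G : SimpleGraph V) (hconn : G.Connected) :
    (Chordal G ∧ ClawFree G ∧ ¬ Nonempty (threeSun ↪g G)) ↔
    ∃ (β : Type) (_ : Fintype β) (T : SimpleGraph β) (P : V → Set β) (r : β),
      T.IsTree ∧
      (∀ v : V, InducesPath T (P v)) ∧
      (∀ u v : V, u ≠ v → (G.Adj u v ↔ (P u ∩ P v).Nonempty)) ∧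
      (∀ u v : V, u ≠ v → NonCrossing T (P u) (P v)) ∧
      (∀ v : V, ∃ e : β, IsPathEnd T (P v) e ∧ ∀ x ∈ P v, Ancestor T r e x) := by
  constructor
  · rintro ⟨hC, hK, hS⟩
    -- the nodes of the tree are taken from `Fin n`, which lies in the required universe
    let φ := Fintype.equivFin V
    let ι : G ≃g G.map φ.toEmbedding := SimpleGraph.Iso.map φ G
    obtain ⟨T, P, r, hT, hP, hadj, hnc, htop⟩ := exists_model (G := G.map φ.toEmbedding)
      (ι.connected_iff.1 hconn)
      (fun n hn ⟨f⟩ => hC n hn ⟨ι.symm.toEmbedding.comp f⟩)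
      (fun ⟨f⟩ => hK ⟨ι.symm.toEmbedding.comp f⟩)
      (fun ⟨f⟩ => hS ⟨ι.symm.toEmbedding.comp f⟩)
    exact ⟨_, inferInstance, T, fun v => P (ι v), r, hT, fun v => hP _,
      fun u v huv => ι.map_adj_iff.symm.trans (hadj _ _ (ι.injective.ne huv)),
      fun u v huv => hnc _ _ (ι.injective.ne huv), fun v => htop _⟩
  · rintro ⟨β, _, T, P, r, hT, hP, hadj, hnc, htop⟩
    choose e he hanc using htop
    have M : RootedModel G T P r e :=
      { tree := hT
        adj := hadj
        nc := hnc
        top_mem := fun v => (he v).1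
        top := hanc
        conv := fun v => (vertical_facts hT (hP v) (he v) (hanc v)).1
        chain := fun v => (vertical_facts hT (hP v) (he v) (hanc v)).2 }
    exact ⟨M.chordal, M.clawFree, M.not_threeSun⟩
end

section
/- A finite connected simple graph G is chordal, claw-free, 3-sun-free, and net-free if and only if G has an NC-path-tree model ({P_v}, T) in which the host tree T is a path (equivalently, G is a proper interval graph). -/
/-!
Forward direction. The point is to find a vertex `s` from which breadth-first search reads off a
proper interval ordering. Call `s` an end vertex if it is simplicial and is not the nose of a bull.

* End vertices exist (`exists_endVertex`). Choose `s` and a component `C` of `G - N[s]` with `C` as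
  large as possible, and let `A` be the set of vertices attached to `C`. Maximality makes every
  vertex outside `C ∪ A` complete to `A` (`adj_of_maximal`); chordality makes `A` a clique;
  claw-freeness makes the rest of the graph a clique. So `V \ C = N[s]` is a clique. If `s` were the
  nose of a bull with triangle `s, x, y`, chordality would give `x` and `y` a common neighbour in
  `C`, and this neighbour would complete a claw or a 3-sun.
* The distance classes from an end vertex are cliques (`IsEndVertex.layer_clique`). In the first
  class where this fails, two nonadjacent vertices with a common predecessor give a claw, and
  otherwise they give a net or, in the second class, a bull with nose `s`.
* Consequently adjacent distance classes induce chain graphs (no induced 4-cycle), and claw-freeness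
  makes the chain orders coming from the two sides of a class compatible. Sorting by distance, and
  inside a class by these chain orders, gives a total preorder (`layerLE`) in which an edge `u w`
  forces every vertex between `u` and `w` to be adjacent to both (`exists_position`).
* Sending each vertex to the interval from its own position to the last position of its closed
  neighbourhood gives the model (`exists_model`): both interval ends are monotone in the position,
  so no two intervals cross.

Converse direction. Connected node sets of a path are intervals, so a model is a family of integer
intervals none of which contains another in its interior (`exists_properRep`). A claw, 3-sun or net
is then excluded by comparing the three pairwise disjoint intervals it contains. In an induced cycle,
the two cyclic neighbours of the interval that ends first both contain its right end, so they
are adjacent, which is impossible for length at least four.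
-/

open SimpleGraph

/-! ### Forbidden induced subgraphs in terms of their vertices -/

section Obstructions

variable {V : Type*} {G : SimpleGraph V}

/-- A chordal graph has no induced cycle listed as `f 0, …, f (m - 1)` with `m ≥ 4`. -/
lemma Chordal.no_hole (hG : Chordal G) {m : ℕ} (hm : 4 ≤ m) (f : ℕ → V)
    (hne : ∀ i j, i < j → j < m → f i ≠ f j)
    (hadj : ∀ i j, i < j → j < m → (G.Adj (f i) (f j) ↔ (j = i + 1 ∨ (i = 0 ∧ j + 1 = m)))) :
    False := by
  refine hG m hm ⟨⟨⟨fun i => f i.val, ?_⟩, ?_⟩⟩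
  · intro i j hij
    by_contra hne'
    rcases lt_or_gt_of_ne (fun h => hne' (Fin.ext h)) with h | h
    · exact hne _ _ h j.isLt hij
    · exact hne _ _ h i.isLt hij.symm
  · intro i j
    obtain ⟨i, hi⟩ := i
    obtain ⟨j, hj⟩ := j
    change G.Adj (f i) (f j) ↔ _
    simp only [cycleGraph_adj', Fin.sub_def]
    rcases lt_trichotomy i j with h | h | h
    · rw [hadj i j h hj]
      have e1 : (m - j + i) % m = m - j + i := Nat.mod_eq_of_lt (by omega)
      have e2 : (m - i + j) % m = j - i := by
        rw [show m - i + j = (j - i) + m by omega, Nat.add_mod_right]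
        exact Nat.mod_eq_of_lt (by omega)
      rw [e1, e2]; omega
    · subst h
      have e : (m - i + i) % m = 0 := by rw [show m - i + i = m by omega]; simp
      simp [e]
    · rw [G.adj_comm, hadj j i h hi]
      have e1 : (m - i + j) % m = m - i + j := Nat.mod_eq_of_lt (by omega)
      have e2 : (m - j + i) % m = i - j := by
        rw [show m - j + i = (i - j) + m by omega, Nat.add_mod_right]
        exact Nat.mod_eq_of_lt (by omega)
      rw [e1, e2]; omega

lemma Chordal.no_C4 (hG : Chordal G) {a b c d : V} (hab : G.Adj a b) (hbc : G.Adj b c)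
    (hcd : G.Adj c d) (hda : G.Adj d a) (hac : ¬ G.Adj a c) (hbd : ¬ G.Adj b d)
    (nac : a ≠ c) (nbd : b ≠ d) : False := by
  let f : ℕ → V := fun i => if i = 0 then a else if i = 1 then b else if i = 2 then c else d
  have h0 : f 0 = a := rfl
  have h1 : f 1 = b := rfl
  have h2 : f 2 = c := rfl
  have h3 : f 3 = d := rfl
  refine hG.no_hole (m := 4) le_rfl f ?_ ?_
  · intro i j hij hj
    have hi : i < 4 := hij.trans hj
    interval_cases j <;> interval_cases i <;>
      simp_all [hab.ne, hbc.ne, hcd.ne, hda.ne.symm]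
  · intro i j hij hj
    have hi : i < 4 := hij.trans hj
    interval_cases j <;> interval_cases i <;> simp_all [G.adj_comm]

lemma ClawFree.no_claw (hG : ClawFree G) {a b c d : V} (hab : G.Adj a b) (hac : G.Adj a c)
    (had : G.Adj a d) (hbc : ¬ G.Adj b c) (hbd : ¬ G.Adj b d) (hcd : ¬ G.Adj c d)
    (nbc : b ≠ c) (nbd : b ≠ d) (ncd : c ≠ d) : False := by
  have hAdj : ∀ i j, G.Adj (![a, b, c, d] i) (![a, b, c, d] j) ↔ claw.Adj i j := by
    intro i j
    fin_cases i <;> fin_cases j <;> simp_all [claw, G.adj_comm]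
  refine hG ⟨⟨⟨![a, b, c, d], ?_⟩, fun {i j} => hAdj i j⟩⟩
  intro i j hij
  fin_cases i <;> fin_cases j <;>
    simp_all [hab.ne, hac.ne, had.ne, hab.ne.symm, hac.ne.symm, had.ne.symm,
      nbc.symm, nbd.symm, ncd.symm]

/-- Six vertices inducing the net; distinctness of the vertices follows from adjacencies. -/
lemma no_net (hG : ¬ Nonempty (net ↪g G)) {a b c x y z : V}
    (hab : G.Adj a b) (hac : G.Adj a c) (hbc : G.Adj b c)
    (hxa : G.Adj x a) (hyb : G.Adj y b) (hzc : G.Adj z c)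
    (hxb : ¬ G.Adj x b) (hxc : ¬ G.Adj x c) (hya : ¬ G.Adj y a) (hyc : ¬ G.Adj y c)
    (hza : ¬ G.Adj z a) (hzb : ¬ G.Adj z b)
    (hxy : ¬ G.Adj x y) (hxz : ¬ G.Adj x z) (hyz : ¬ G.Adj y z) : False := by
  have hAdj : ∀ i j, G.Adj (![a, b, c, x, y, z] i) (![a, b, c, x, y, z] j) ↔ net.Adj i j := by
    intro i j
    fin_cases i <;> fin_cases j <;> simp_all [net, G.adj_comm]
  refine hG ⟨⟨⟨![a, b, c, x, y, z], ?_⟩, fun {i j} => hAdj i j⟩⟩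
  intro i j hij
  -- distinct vertices of the net have distinct neighbourhoods
  have key : ∀ k, net.Adj i k ↔ net.Adj j k := fun k => by rw [← hAdj, ← hAdj, hij]
  have k0 := key 0
  have k1 := key 1
  have k2 := key 2
  have k3 := key 3
  have k4 := key 4
  have k5 := key 5
  clear key hij hAdj
  revert k0 k1 k2 k3 k4 k5
  fin_cases i <;> fin_cases j <;> simp [net]

/-- Six vertices inducing the 3-sun; distinctness of the vertices follows from adjacencies. -/
lemma no_threeSun (hG : ¬ Nonempty (threeSun ↪g G)) {a b c x y z : V}
    (hab : G.Adj a b) (hac : G.Adj a c) (hbc : G.Adj b c)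
    (hxa : G.Adj x a) (hxb : G.Adj x b) (hyb : G.Adj y b) (hyc : G.Adj y c)
    (hzc : G.Adj z c) (hza : G.Adj z a)
    (hxc : ¬ G.Adj x c) (hya : ¬ G.Adj y a) (hzb : ¬ G.Adj z b)
    (hxy : ¬ G.Adj x y) (hxz : ¬ G.Adj x z) (hyz : ¬ G.Adj y z) : False := by
  have hAdj : ∀ i j, G.Adj (![a, b, c, x, y, z] i) (![a, b, c, x, y, z] j) ↔
      threeSun.Adj i j := by
    intro i j
    fin_cases i <;> fin_cases j <;> simp_all [threeSun, G.adj_comm]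
  refine hG ⟨⟨⟨![a, b, c, x, y, z], ?_⟩, fun {i j} => hAdj i j⟩⟩
  intro i j hij
  -- distinct vertices of the 3-sun have distinct neighbourhoods
  have key : ∀ k, threeSun.Adj i k ↔ threeSun.Adj j k := fun k => by rw [← hAdj, ← hAdj, hij]
  have k0 := key 0
  have k1 := key 1
  have k2 := key 2
  have k3 := key 3
  have k4 := key 4
  have k5 := key 5
  clear key hij hAdj
  revert k0 k1 k2 k3 k4 k5
  fin_cases i <;> fin_cases j <;> simp [threeSun]

end Obstructions

/-! ### Components of `G - N[s]` and paths through them -/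

section FarComponents

variable {V : Type*} {G : SimpleGraph V}

/-- A shortest walk is an induced path. -/
lemma exists_induced_path {H : SimpleGraph V} {x y : V} (h : H.Reachable x y) :
    ∃ (q : ℕ → V) (m : ℕ), q 0 = x ∧ q m = y ∧
      ∀ i j, i < j → j ≤ m → q i ≠ q j ∧ (H.Adj (q i) (q j) ↔ j = i + 1) := by
  obtain ⟨p, hp⟩ := h.exists_walk_length_eq_dist
  refine ⟨p.getVert, p.length, p.getVert_zero, p.getVert_length, fun i j hij hj => ⟨?_, ?_, ?_⟩⟩
  · intro he
    have h1 := H.dist_le ((p.take i).append ((p.drop j).copy he.symm rfl))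
    simp only [Walk.length_append, Walk.length_copy, Walk.take_length, Walk.drop_length] at h1
    omega
  · intro ha
    have h1 := H.dist_le ((p.take i).append (Walk.cons ha (p.drop j)))
    simp only [Walk.length_append, Walk.length_cons, Walk.take_length, Walk.drop_length] at h1
    omega
  · rintro rfl
    exact p.adj_getVert_succ (by omega)

/-- The graph `G` with all edges meeting the closed neighbourhood of `s` removed. -/
def farGraph (G : SimpleGraph V) (s : V) : SimpleGraph V where
  Adj a b := G.Adj a b ∧ (a ≠ s ∧ ¬ G.Adj s a) ∧ (b ≠ s ∧ ¬ G.Adj s b)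
  symm := ⟨fun _ _ h => ⟨h.1.symm, h.2.2, h.2.1⟩⟩
  loopless := ⟨fun _ h => h.1.ne rfl⟩

/-- The component of `c` in `G - N[s]` (for `c` outside `N[s]`). -/
def farComp (G : SimpleGraph V) (s c : V) : Set V := {v | (farGraph G s).Reachable c v}

lemma self_mem_farComp (s c : V) : c ∈ farComp G s c := Reachable.refl c

lemma farComp_subset {s c v : V} (hc : c ≠ s ∧ ¬ G.Adj s c) (hv : v ∈ farComp G s c) :
    v ≠ s ∧ ¬ G.Adj s v := by
  have h : (farGraph G s).Reachable c v := hv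
  rw [reachable_iff_reflTransGen] at h
  induction h with
  | refl => exact hc
  | tail _ h _ => exact h.2.2

lemma farComp_closed {s c u v : V} (hc : c ≠ s ∧ ¬ G.Adj s c) (hu : u ∈ farComp G s c)
    (huv : G.Adj u v) (hv : v ≠ s ∧ ¬ G.Adj s v) : v ∈ farComp G s c := by
  have h : (farGraph G s).Adj u v := ⟨huv, farComp_subset hc hu, hv⟩
  exact Reachable.trans hu h.reachable

/-- Two vertices attached to a component of `G - N[s]` are joined through that component by a
path which is induced, except that its two ends may be adjacent. -/
lemma exists_path_through {s c x y c₁ c₂ : V} (hc : c ≠ s ∧ ¬ G.Adj s c) (hxy : x ≠ y)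
    (hx : x ∉ farComp G s c) (hy : y ∉ farComp G s c)
    (h₁ : c₁ ∈ farComp G s c) (h₂ : c₂ ∈ farComp G s c) (hx₁ : G.Adj x c₁) (hy₂ : G.Adj y c₂) :
    ∃ (q : ℕ → V) (m : ℕ), 2 ≤ m ∧ q 0 = x ∧ q m = y ∧
      (∀ i j, i < j → j ≤ m → q i ≠ q j) ∧ (∀ i, 0 < i → i < m → q i ∈ farComp G s c) ∧
      (∀ i j, i < j → j ≤ m → (i ≠ 0 ∨ j ≠ m) → (G.Adj (q i) (q j) ↔ j = i + 1)) := by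
  classical
  set C := farComp G s c with hC
  let H : SimpleGraph V :=
    { Adj := fun a b => G.Adj a b ∧ (a ∈ C ∨ b ∈ C) ∧ (a ∈ C ∨ a = x ∨ a = y) ∧
        (b ∈ C ∨ b = x ∨ b = y)
      symm := ⟨fun a b h => ⟨h.1.symm, h.2.1.symm, h.2.2.2, h.2.2.1⟩⟩
      loopless := ⟨fun a h => h.1.ne rfl⟩ }
  have hK : (farGraph G s).Reachable c₁ c₂ := Reachable.trans (Reachable.symm h₁) h₂
  have hH : H.Reachable c₁ c₂ ∧ c₂ ∈ C := by
    rw [reachable_iff_reflTransGen] at hK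
    clear hy₂ h₂
    induction hK with
    | refl => exact ⟨Reachable.refl _, h₁⟩
    | @tail b d _ h ih =>
      have hd : d ∈ C := farComp_closed hc ih.2 h.1 h.2.2
      have : H.Adj b d := ⟨h.1, Or.inl ih.2, Or.inl ih.2, Or.inl hd⟩
      exact ⟨ih.1.trans this.reachable, hd⟩
  have a₁ : H.Adj x c₁ := ⟨hx₁, Or.inr h₁, Or.inr (Or.inl rfl), Or.inl h₁⟩
  have a₂ : H.Adj c₂ y := ⟨hy₂.symm, Or.inl h₂, Or.inl h₂, Or.inr (Or.inr rfl)⟩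
  obtain ⟨q, m, q0, qm, hq⟩ :=
    exists_induced_path (a₁.reachable.trans (hH.1.trans a₂.reachable))
  have hm0 : m ≠ 0 := fun h => hxy (by rw [← q0, ← qm, h])
  have hm1 : m ≠ 1 := by
    intro h
    have : H.Adj (q 0) (q 1) := ((hq 0 1 one_pos h.ge).2).2 rfl
    rw [← h, q0, qm] at this
    exact this.2.1.elim hx hy
  have hint : ∀ i, 0 < i → i < m → q i ∈ C := by
    intro i hi him
    have h1 : H.Adj (q i) (q (i + 1)) := ((hq i (i + 1) (by omega) him).2).2 rfl
    rcases h1.2.2.1 with h | h | h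
    · exact h
    · exact absurd (q0.trans h.symm) (hq 0 i hi him.le).1
    · exact absurd (h.trans qm.symm) (hq i m him le_rfl).1
  refine ⟨q, m, by omega, q0, qm, fun i j hij hj => (hq i j hij hj).1, hint, ?_⟩
  intro i j hij hj hor
  rw [← (hq i j hij hj).2]
  refine ⟨fun h => ⟨h, ?_, ?_, ?_⟩, fun h => h.1⟩
  · rcases hor with h | h
    · exact Or.inl (hint i (by omega) (by omega))
    · exact Or.inr (hint j (by omega) (by omega))
  · rcases Nat.eq_zero_or_pos i with h | h
    · exact Or.inr (Or.inl (h ▸ q0))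
    · exact Or.inl (hint i h (by omega))
  · rcases hj.eq_or_lt with h | h
    · exact Or.inr (Or.inr (h ▸ qm))
    · exact Or.inl (hint j (by omega) h)

/-- In a chordal graph, the neighbours of `s` attached to a common component of `G - N[s]`
form a clique. -/
lemma Chordal.attachments_adj (hG : Chordal G) {s c x y c₁ c₂ : V} (hc : c ≠ s ∧ ¬ G.Adj s c)
    (hxy : x ≠ y) (hsx : G.Adj s x) (hsy : G.Adj s y) (h₁ : c₁ ∈ farComp G s c)
    (h₂ : c₂ ∈ farComp G s c) (hx₁ : G.Adj x c₁) (hy₂ : G.Adj y c₂) : G.Adj x y := by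
  by_contra hna
  obtain ⟨q, m, hm, q0, qm, hne, hint, hadj⟩ := exists_path_through hc hxy
    (fun h => (farComp_subset hc h).2 hsx) (fun h => (farComp_subset hc h).2 hsy) h₁ h₂ hx₁ hy₂
  let f : ℕ → V := fun i => if i ≤ m then q i else s
  have hf : ∀ i, i ≤ m → f i = q i := fun i hi => if_pos hi
  have hfs : f (m + 1) = s := if_neg (by omega)
  refine hG.no_hole (m := m + 2) (by omega) f ?_ ?_
  · intro i j hij hj
    rw [hf i (by omega)]
    rcases Nat.lt_or_ge m j with h | h
    · obtain rfl : j = m + 1 := by omega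
      rw [hfs]
      rcases Nat.eq_zero_or_pos i with h0 | h0
      · rw [h0, q0]; exact hsx.ne.symm
      rcases (show i ≤ m by omega).eq_or_lt with h1 | h1
      · rw [h1, qm]; exact hsy.ne.symm
      · exact (farComp_subset hc (hint i h0 h1)).1
    · rw [hf j h]; exact hne i j hij h
  · intro i j hij hj
    rw [hf i (by omega)]
    rcases Nat.lt_or_ge m j with h | h
    · obtain rfl : j = m + 1 := by omega
      rw [hfs]
      rcases Nat.eq_zero_or_pos i with h0 | h0
      · rw [h0, q0]; simp [hsx.symm]
      rcases (show i ≤ m by omega).eq_or_lt with h1 | h1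
      · rw [h1, qm]; simp [hsy.symm]
      · have := (farComp_subset hc (hint i h0 h1)).2
        rw [G.adj_comm]
        exact iff_of_false this (by omega)
    · rw [hf j h]
      by_cases h0 : i ≠ 0 ∨ j ≠ m
      · rw [hadj i j hij h h0]; omega
      · obtain ⟨rfl, rfl⟩ : i = 0 ∧ j = m := by omega
        rw [q0, qm]
        exact iff_of_false hna (by omega)

/-- In a chordal graph, two adjacent vertices attached to a common component of `G - N[s]`
have a common neighbour in that component. -/
lemma Chordal.common_neighbor (hG : Chordal G) {s c x y c₁ c₂ : V}
    (hc : c ≠ s ∧ ¬ G.Adj s c) (hxy : G.Adj x y) (hx : x ∉ farComp G s c)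
    (hy : y ∉ farComp G s c) (h₁ : c₁ ∈ farComp G s c) (h₂ : c₂ ∈ farComp G s c)
    (hx₁ : G.Adj x c₁) (hy₂ : G.Adj y c₂) :
    ∃ w ∈ farComp G s c, G.Adj x w ∧ G.Adj y w := by
  obtain ⟨q, m, hm, q0, qm, hne, hint, hadj⟩ :=
    exists_path_through hc hxy.ne hx hy h₁ h₂ hx₁ hy₂
  rcases hm.eq_or_lt with h | h
  · subst h
    refine ⟨q 1, hint 1 (by omega) (by omega), ?_, ?_⟩
    · rw [← q0, hadj 0 1 (by omega) (by omega) (by omega)]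
    · rw [← qm, G.adj_comm, hadj 1 2 (by omega) (by omega) (by omega)]
  · exfalso
    refine hG.no_hole (m := m + 1) (by omega) q (fun i j hij hj => hne i j hij (by omega)) ?_
    intro i j hij hj
    by_cases h0 : i ≠ 0 ∨ j ≠ m
    · rw [hadj i j hij (by omega) h0]; omega
    · obtain ⟨rfl, rfl⟩ : i = 0 ∧ j = m := by omega
      rw [q0, qm]
      exact iff_of_true hxy (by omega)

end FarComponents

/-! ### Existence of an end vertex -/

section EndVertex

variable {V : Type*} {G : SimpleGraph V}

/-- A vertex at which a proper interval ordering of `G` may start: a simplicial vertex which is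
not the nose of a bull (a triangle `s, x, y` with pendant vertices `u` at `x` and `v` at `y`). -/
structure IsEndVertex (G : SimpleGraph V) (s : V) : Prop where
  simplicial : ∀ a b, G.Adj s a → G.Adj s b → a ≠ b → G.Adj a b
  no_bull : ∀ x y u v, G.Adj s x → G.Adj s y → x ≠ y → G.Adj x u → G.Adj y v →
    (u ≠ s ∧ ¬ G.Adj s u) → (v ≠ s ∧ ¬ G.Adj s v) → ¬ G.Adj x v → ¬ G.Adj y u →
    ¬ G.Adj u v → False

/-- If the component `C` of `c` in `G - N[s]` is as large as possible over all choices of `s`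
and `c`, then a vertex neither in `C` nor attached to `C` is joined to every attachment of `C`. -/
lemma adj_of_maximal [Finite V] {s c : V} (hc : c ≠ s ∧ ¬ G.Adj s c)
    (hmax : ∀ s' c', (c' ≠ s' ∧ ¬ G.Adj s' c') → (farComp G s' c').ncard ≤ (farComp G s c).ncard)
    {r z b : V} (hr : r ∉ farComp G s c) (hrN : ∀ b ∈ farComp G s c, ¬ G.Adj r b)
    (hz : z ∉ farComp G s c) (hb : b ∈ farComp G s c) (hzb : G.Adj z b) : G.Adj r z := by
  by_contra hrz
  have hzr : z ≠ r := fun h => hrN b hb (h ▸ hzb)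
  have hfar : ∀ v ∈ farComp G s c, v ≠ r ∧ ¬ G.Adj r v :=
    fun v hv => ⟨fun h => hr (h ▸ hv), hrN v hv⟩
  have hsub : farComp G s c ⊆ farComp G r c := by
    intro v hv
    have h : (farGraph G s).Reachable c v := hv
    rw [reachable_iff_reflTransGen] at h
    have : v ∈ farComp G s c ∧ v ∈ farComp G r c := by
      clear hv
      induction h with
      | refl => exact ⟨self_mem_farComp s c, self_mem_farComp r c⟩
      | @tail b d _ h ih =>
        have hd := farComp_closed hc ih.1 h.1 h.2.2
        exact ⟨hd, farComp_closed (hfar c (self_mem_farComp s c)) ih.2 h.1 (hfar d hd)⟩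
    exact this.2
  have hzC : z ∈ farComp G r c :=
    farComp_closed (hfar c (self_mem_farComp s c)) (hsub hb) hzb.symm ⟨hzr, hrz⟩
  have hlt : (farComp G s c).ncard < (farComp G r c).ncard :=
    Set.ncard_lt_ncard ⟨hsub, fun h => hz (h hzC)⟩ (Set.toFinite _)
  exact absurd (hmax r c (hfar c (self_mem_farComp s c))) (by omega)

lemma exists_endVertex [Finite V] (hconn : G.Connected) (hch : Chordal G) (hcl : ClawFree G)
    (hsun : ¬ Nonempty (threeSun ↪g G)) : ∃ s, IsEndVertex G s := by
  by_cases hcomp : ∀ s c : V, c ≠ s → G.Adj s c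
  · obtain ⟨s⟩ := hconn.nonempty
    exact ⟨s, fun a b _ _ h => hcomp a b h.symm,
      fun x y u v _ _ _ _ _ hu _ _ _ _ => hu.2 (hcomp s u hu.1)⟩
  push Not at hcomp
  obtain ⟨s₀, c₀, h₀⟩ := hcomp
  obtain ⟨⟨s, c⟩, hc, hmax'⟩ := Set.exists_max_image
    {p : V × V | p.2 ≠ p.1 ∧ ¬ G.Adj p.1 p.2} (fun p => (farComp G p.1 p.2).ncard)
    (Set.toFinite _) ⟨(s₀, c₀), h₀⟩
  change c ≠ s ∧ ¬ G.Adj s c at hc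
  have hmax : ∀ s' c', (c' ≠ s' ∧ ¬ G.Adj s' c') →
      (farComp G s' c').ncard ≤ (farComp G s c).ncard := fun s' c' h => hmax' (s', c') h
  clear hmax'
  set C := farComp G s c with hC
  have hsC : s ∉ C := fun h => (farComp_subset hc h).1 rfl
  have hNC : ∀ a, G.Adj s a → a ∉ C := fun a ha h => (farComp_subset hc h).2 ha
  have hsN : ∀ b ∈ C, ¬ G.Adj s b := fun b hb => (farComp_subset hc hb).2
  -- some vertex `z` is attached to `C`, since `G` is connected
  obtain ⟨z, z', hz, hz', hzz'⟩ : ∃ z z', z ∉ C ∧ z' ∈ C ∧ G.Adj z z' := by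
    obtain ⟨w⟩ := hconn c s
    obtain ⟨d, -, hd₁, hd₂⟩ := w.exists_boundary_dart C (self_mem_farComp s c) hsC
    exact ⟨d.snd, d.fst, hd₂, hd₁, d.adj.symm⟩
  -- by claw-freeness, the vertices outside `C` and not attached to `C` form a clique
  have hR : ∀ a b, a ∉ C → b ∉ C → (∀ e ∈ C, ¬ G.Adj a e) → (∀ e ∈ C, ¬ G.Adj b e) →
      a ≠ b → G.Adj a b := by
    intro a b ha hb haN hbN hab
    by_contra hna
    have h1 := adj_of_maximal hc hmax ha haN hz hz' hzz'
    have h2 := adj_of_maximal hc hmax hb hbN hz hz' hzz'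
    exact hcl.no_claw hzz' h1.symm h2.symm (fun h => haN _ hz' h.symm)
      (fun h => hbN _ hz' h.symm) hna (fun h => ha (h ▸ hz')) (fun h => hb (h ▸ hz')) hab
  -- hence every vertex outside `N[s]` lies in `C`
  have hout : ∀ u, (u ≠ s ∧ ¬ G.Adj s u) → u ∈ C := by
    intro u hu
    by_contra huC
    by_cases huN : ∃ e ∈ C, G.Adj u e
    · obtain ⟨e, he, hue⟩ := huN
      exact hu.2 (adj_of_maximal hc hmax hsC hsN huC he hue)
    · push Not at huN
      exact hu.2 (hR s u hsC huC hsN huN hu.1.symm)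
  refine ⟨s, ?_, ?_⟩
  · intro a b ha hb hab
    by_cases haN : ∃ e ∈ C, G.Adj a e
    · obtain ⟨e, he, hae⟩ := haN
      by_cases hbN : ∃ e ∈ C, G.Adj b e
      · obtain ⟨e', he', hbe⟩ := hbN
        exact hch.attachments_adj hc hab ha hb he he' hae hbe
      · push Not at hbN
        exact (adj_of_maximal hc hmax (hNC b hb) hbN (hNC a ha) he hae).symm
    · push Not at haN
      by_cases hbN : ∃ e ∈ C, G.Adj b e
      · obtain ⟨e', he', hbe⟩ := hbN
        exact adj_of_maximal hc hmax (hNC a ha) haN (hNC b hb) he' hbe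
      · push Not at hbN
        exact hR a b (hNC a ha) (hNC b hb) haN hbN hab
  · intro x y u v hsx hsy hxy hxu hyv hu hv hxv hyu huv
    have huC := hout u hu
    have hvC := hout v hv
    have hadj := hch.attachments_adj hc hxy hsx hsy huC hvC hxu hyv
    obtain ⟨w, hwC, hxw, hyw⟩ :=
      hch.common_neighbor hc hadj (hNC x hsx) (hNC y hsy) huC hvC hxu hyv
    have hsw := farComp_subset hc hwC
    have hwu : G.Adj w u := by
      by_contra h
      exact hcl.no_claw hsx.symm hxu hxw hu.2 hsw.2 (fun h' => h h'.symm) hu.1.symm hsw.1.symm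
        (fun h' => hyu (h' ▸ hyw))
    have hwv : G.Adj w v := by
      by_contra h
      exact hcl.no_claw hsy.symm hyv hyw hv.2 hsw.2 (fun h' => h h'.symm) hv.1.symm hsw.1.symm
        (fun h' => hxv (h' ▸ hxw))
    -- `s, x, y, w, u, v` induce a 3-sun with central triangle `x, y, w`
    exact no_threeSun hsun (a := x) (b := y) (c := w) (x := s) (y := v) (z := u)
      hadj hxw hyw hsx hsy hyv.symm hwv.symm hwu.symm hxu.symm hsw.2
      (fun h => hxv h.symm) (fun h => hyu h.symm) hv.2 hu.2 (fun h => huv h.symm)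

end EndVertex

/-! ### Distance classes from an end vertex -/

section Layers

variable {V : Type*} {G : SimpleGraph V}

lemma exists_pred (hconn : G.Connected) (s : V) {v : V} {i : ℕ} (hv : G.dist s v = i + 1) :
    ∃ u, G.Adj u v ∧ G.dist s u = i := by
  obtain ⟨p, hp⟩ := hconn.exists_walk_length_eq_dist s v
  have ha : G.Adj (p.getVert i) (p.getVert (i + 1)) := p.adj_getVert_succ (by omega)
  rw [show i + 1 = p.length by omega, p.getVert_length] at ha
  refine ⟨_, ha, ?_⟩
  have h1 := G.dist_le (p.take i)
  rw [Walk.take_length] at h1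
  have h2 := ha.diff_dist_adj (u := s)
  omega

lemma dist_le_of_adj (s : V) {u v : V} (h : G.Adj u v) : G.dist s v ≤ G.dist s u + 1 := by
  have := h.diff_dist_adj (u := s)
  omega

/-- In a chordal graph, the neighbourhoods of the vertices of a clique inside a disjoint clique
form a chain under inclusion. -/
lemma Chordal.chain (hG : Chordal G) {u v u' v' : V} (huv : u ≠ v → G.Adj u v)
    (huv' : u' ≠ v' → G.Adj u' v') (hu : G.Adj u u') (hv : G.Adj v v') (h1 : ¬ G.Adj u v')
    (h2 : ¬ G.Adj v u') (n1 : u ≠ v') (n2 : v ≠ u') : False :=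
  hG.no_C4 hu (huv' (fun h => h1 (h ▸ hu))) hv.symm (huv (fun h => h1 (h ▸ hv))).symm h1
    (fun h => h2 h.symm) n1 n2.symm

/-- The distance classes from an end vertex are cliques. -/
lemma IsEndVertex.layer_clique {s : V} (hs : IsEndVertex G s) (hconn : G.Connected)
    (hch : Chordal G) (hcl : ClawFree G) (hnet : ¬ Nonempty (net ↪g G)) :
    ∀ (i : ℕ) (u v : V), G.dist s u = i → G.dist s v = i → u ≠ v → G.Adj u v := by
  intro i
  induction i using Nat.strong_induction_on with
  | _ i ih =>
    intro u v hu hv huv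
    by_contra hna
    rcases i with _ | _ | i
    · rw [hconn.dist_eq_zero_iff] at hu hv
      exact absurd (hu.symm.trans hv) huv
    · rw [zero_add, dist_eq_one_iff_adj] at hu hv
      exact hna (hs.simplicial u v hu hv huv)
    obtain ⟨x, hxu, hx⟩ := exists_pred hconn s hu
    obtain ⟨y, hyv, hy⟩ := exists_pred hconn s hv
    have hfar : ∀ a b, G.dist s a = i → G.dist s b = i + 2 → ¬ G.Adj a b ∧ a ≠ b := by
      refine fun a b ha hb => ⟨fun h => ?_, fun h => ?_⟩
      · have := dist_le_of_adj s h; omega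
      · rw [h] at ha; omega
    -- a common neighbour of `u` and `v` in the previous layer would be the centre of a claw
    have hcommon : ∀ w, G.dist s w = i + 1 → G.Adj w u → ¬ G.Adj w v := by
      intro w hw hwu hwv
      obtain ⟨p, hpw, hp⟩ := exists_pred hconn s hw
      exact hcl.no_claw hpw.symm hwu hwv (hfar p u hp hu).1 (hfar p v hp hv).1 hna
        (hfar p u hp hu).2 (hfar p v hp hv).2 huv
    have hxv := hcommon x hx hxu
    have hyu : ¬ G.Adj y u := fun h => hcommon y hy h hyv
    have hxy : G.Adj x y := ih (i + 1) (by omega) x y hx hy (fun h => hxv (h ▸ hyv))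
    obtain ⟨p, hpx, hpy, hp⟩ : ∃ p, G.Adj p x ∧ G.Adj p y ∧ G.dist s p = i := by
      obtain ⟨p, hpx, hp⟩ := exists_pred hconn s hx
      obtain ⟨r, hry, hr⟩ := exists_pred hconn s hy
      by_cases h1 : G.Adj p y
      · exact ⟨p, hpx, h1, hp⟩
      by_cases h2 : G.Adj r x
      · exact ⟨r, h2, hry, hr⟩
      exfalso
      exact hch.chain (ih i (by omega) p r hp hr) (fun _ => hxy) hpx hry h1 h2
        (fun h => by rw [h] at hp; omega) (fun h => by rw [h] at hr; omega)
    rcases i with _ | i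
    · rw [hconn.dist_eq_zero_iff] at hp
      subst hp
      have hout : ∀ a, G.dist s a = 0 + 1 + 1 → a ≠ s ∧ ¬ G.Adj s a := by
        refine fun a ha => ⟨fun h => ?_, fun h => ?_⟩
        · rw [h, dist_self] at ha; omega
        · rw [← dist_eq_one_iff_adj] at h; omega
      exact hs.no_bull x y u v hpx hpy hxy.ne hxu hyv (hout u hu) (hout v hv) hxv hyu hna
    · obtain ⟨q, hqp, hq⟩ := exists_pred hconn s hp
      have hqfar : ∀ a, i + 2 ≤ G.dist s a → ¬ G.Adj q a := by
        intro a ha h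
        have := dist_le_of_adj s h; omega
      exact no_net hnet hpx hpy hxy hqp hxu.symm hyv.symm (hqfar x (by omega))
        (hqfar y (by omega)) (fun h => (hfar p u hp hu).1 h.symm) (fun h => hyu h.symm)
        (fun h => (hfar p v hp hv).1 h.symm) (fun h => hxv h.symm) (hqfar u (by omega))
        (hqfar v (by omega)) hna

/-- The ordering of the vertices by distance from `s`, where inside a distance class the vertices
are sorted by decreasing neighbourhood in the preceding class and increasing neighbourhood in the
following one. -/
def layerLE (G : SimpleGraph V) (s u v : V) : Prop :=
  G.dist s u < G.dist s v ∨ (G.dist s u = G.dist s v ∧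
    (∀ p, G.dist s p + 1 = G.dist s u → G.Adj p v → G.Adj p u) ∧
    (∀ q, G.dist s q = G.dist s u + 1 → G.Adj u q → G.Adj v q))

lemma layerLE_trans {s u v w : V} (h1 : layerLE G s u v) (h2 : layerLE G s v w) :
    layerLE G s u w := by
  rcases h1 with h1 | ⟨h1, h1p, h1q⟩ <;> rcases h2 with h2 | ⟨h2, h2p, h2q⟩
  · exact Or.inl (by omega)
  · exact Or.inl (by omega)
  · exact Or.inl (by omega)
  · exact Or.inr ⟨by omega, fun p hp h => h1p p hp (h2p p (by omega) h),
      fun q hq h => h2q q (by omega) (h1q q hq h)⟩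

lemma IsEndVertex.layerLE_total {s : V} (hs : IsEndVertex G s) (hconn : G.Connected)
    (hch : Chordal G) (hcl : ClawFree G) (hnet : ¬ Nonempty (net ↪g G)) (u v : V) :
    layerLE G s u v ∨ layerLE G s v u := by
  have hlayer := hs.layer_clique hconn hch hcl hnet
  rcases lt_trichotomy (G.dist s u) (G.dist s v) with h | h | h
  · exact Or.inl (Or.inl h)
  · have hcliq : u ≠ v → G.Adj u v := hlayer _ u v h rfl
    have hne : ∀ a b, G.dist s a ≠ G.dist s b → a ≠ b := fun a b h h' => h (h' ▸ rfl)
    -- chain condition towards an adjacent layer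
    have hchain : ∀ a b, G.dist s a = G.dist s b → G.dist s a ≠ G.dist s u → G.Adj u a →
        G.Adj v b → ¬ G.Adj u b → ¬ G.Adj v a → False :=
      fun a b hab ha hua hvb hub hva => hch.chain hcliq (hlayer _ a b hab rfl) hua hvb hub hva
        (hne u b (by omega)) (hne v a (by omega))
    -- claw condition, linking the two adjacent layers
    have hclaw : ∀ a b x y, G.dist s x + 1 = G.dist s a →
        G.dist s y = G.dist s a + 1 → G.dist s a = G.dist s b → G.Adj a b → G.Adj x a →
        G.Adj a y → ¬ G.Adj x b → ¬ G.Adj b y → False := by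
      intro a b x y hx hy hab haab hxa hay hxb hby
      refine hcl.no_claw hxa.symm haab hay hxb (fun h => ?_) hby (hne x b (by omega))
        (hne x y (by omega)) (hne b y (by omega))
      have := dist_le_of_adj s h
      omega
    by_contra hcon
    simp only [layerLE, not_or, not_and_or, h, lt_self_iff_false, true_and, false_or] at hcon
    push Not at hcon
    obtain ⟨h1, h2⟩ := hcon
    have huv : G.Adj u v := by
      apply hcliq
      rintro rfl
      rcases h1 with ⟨p, -, h3, h4⟩ | ⟨p, -, h3, h4⟩ <;> exact h4 h3
    rcases h1 with ⟨p, hp, hpv, hpu⟩ | ⟨q, hq, huq, hvq⟩ <;>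
      rcases h2 with ⟨p', hp', hpu', hpv'⟩ | ⟨q', hq', hvq', huq'⟩
    · exact hchain p' p (by omega) (by omega) hpu'.symm hpv.symm (fun h => hpu h.symm)
        (fun h => hpv' h.symm)
    · exact hclaw v u p q' hp hq' h.symm huv.symm hpv hvq' hpu huq'
    · exact hclaw u v p' q (by omega) (by omega) h huv hpu' huq hpv' hvq
    · exact hchain q q' (by omega) (by omega) huq hvq' huq' hvq
  · exact Or.inr (Or.inl h)

/-- Existence of a proper interval ordering, encoded by positions which may coincide: an edge
`u w` forces every vertex positioned between `u` and `w` to be joined to both. -/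
lemma exists_position [Finite V] (hconn : G.Connected) (hch : Chordal G) (hcl : ClawFree G)
    (hsun : ¬ Nonempty (threeSun ↪g G)) (hnet : ¬ Nonempty (net ↪g G)) :
    ∃ pos : V → ℕ,
      (∀ u v w, pos u ≤ pos v → pos v ≤ pos w → G.Adj u w →
        (u ≠ v → G.Adj u v) ∧ (v ≠ w → G.Adj v w)) ∧
      (∀ u v, pos u = pos v → u ≠ v → G.Adj u v) := by
  obtain ⟨s, hs⟩ := exists_endVertex hconn hch hcl hsun
  have hlayer := hs.layer_clique hconn hch hcl hnet
  have htot := hs.layerLE_total hconn hch hcl hnet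
  let pos : V → ℕ := fun v => {w | layerLE G s w v}.ncard
  have hpos : ∀ u v, pos u ≤ pos v → layerLE G s u v := by
    intro u v h
    rcases htot u v with h' | h'
    · exact h'
    · have hsub : {w | layerLE G s w v} ⊆ {w | layerLE G s w u} :=
        fun w hw => layerLE_trans hw h'
      have heq := Set.eq_of_subset_of_ncard_le hsub h (Set.toFinite _)
      have hu : u ∈ {w | layerLE G s w u} := (htot u u).elim id id
      rw [← heq] at hu
      exact hu
  have hdist : ∀ u v, layerLE G s u v → G.dist s u ≤ G.dist s v := by
    rintro u v (h | h)
    · exact h.le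
    · exact h.1.le
  refine ⟨pos, ?_, ?_⟩
  · intro u v w huv hvw hadj
    have h1 := hpos u v huv
    have h2 := hpos v w hvw
    have d1 := hdist u v h1
    have d2 := hdist v w h2
    have d3 := dist_le_of_adj s hadj
    rcases d1.eq_or_lt with e1 | e1
    · refine ⟨hlayer _ u v e1 rfl, fun hne => ?_⟩
      rcases d2.eq_or_lt with e2 | e2
      · exact hlayer _ v w e2 rfl hne
      · rcases h1 with h1 | h1
        · omega
        · exact h1.2.2 w (by omega) hadj
    · refine ⟨fun hne => ?_, hlayer _ v w (by omega) rfl⟩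
      rcases h2 with h2 | h2
      · omega
      · exact h2.2.1 u (by omega) hadj
  · intro u v h hne
    exact hlayer _ u v (le_antisymm (hdist _ _ (hpos u v h.le)) (hdist _ _ (hpos v u h.ge))) rfl hne

end Layers

/-! ### Interval models on a path -/

section PathHost

lemma pathGraph_isTree (n : ℕ) : (pathGraph (n + 1)).IsTree := by
  refine ⟨pathGraph_connected n, ?_⟩
  rw [isAcyclic_iff_forall_adj_isBridge]
  have key : ∀ u v : Fin (n + 1), u.val + 1 = v.val → (pathGraph (n + 1)).IsBridge s(u, v) := by
    intro u v huv
    rw [isBridge_iff]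
    intro h
    -- no edge other than `u v` crosses from the nodes up to `u` to the nodes beyond `u`
    have aux : ∀ w, ((pathGraph (n + 1)).deleteEdges {s(u, v)}).Reachable u w →
        w.val ≤ u.val := by
      intro w hw
      rw [reachable_iff_reflTransGen] at hw
      induction hw with
      | refl => exact le_rfl
      | @tail b c _ hbc ih =>
        rw [deleteEdges_adj] at hbc
        obtain ⟨hbc, hne⟩ := hbc
        rw [pathGraph_adj] at hbc
        by_contra hlt
        apply hne
        have hb : b = u := Fin.ext (by omega)
        have hc : c = v := Fin.ext (by omega)
        simp [hb, hc]
    have := aux v h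
    omega
  intro u v huv
  rcases pathGraph_adj.1 huv with h | h
  · exact key u v h
  · rw [Sym2.eq_swap]; exact key v u h

lemma inducesPath_interval {n a b : ℕ} (hab : a ≤ b) (hb : b ≤ n) :
    InducesPath (pathGraph (n + 1)) {i | a ≤ i.val ∧ i.val ≤ b} := by
  refine ⟨b - a, fun i => ⟨a + i.val, by omega⟩, ?_, ?_, ?_⟩
  · intro i j h
    simp only [Fin.mk.injEq] at h
    exact Fin.ext (by omega)
  · ext i
    simp only [Set.mem_range, Set.mem_ofPred_eq]
    constructor
    · rintro ⟨j, rfl⟩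
      simp only
      omega
    · rintro ⟨h1, h2⟩
      exact ⟨⟨i.val - a, by omega⟩, Fin.ext (by simp only; omega)⟩
  · intro i j
    rw [pathGraph_adj]
    simp only
    omega

lemma preconnected_of_interval {n : ℕ} {S : Set (Fin (n + 1))}
    (hS : ∀ i j k : Fin (n + 1), i ∈ S → k ∈ S → i ≤ j → j ≤ k → j ∈ S) :
    ((pathGraph (n + 1)).induce S).Preconnected := by
  have key : ∀ (d : ℕ) (x y : S), x.val.val + d = y.val.val →
      ((pathGraph (n + 1)).induce S).Reachable x y := by
    intro d
    induction d with
    | zero =>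
      intro x y h
      have : x = y := Subtype.ext (Fin.ext h)
      rw [this]
    | succ d ih =>
      intro x y h
      have hlt : x.val.val + d < n + 1 := by have := y.val.isLt; omega
      have hz : (⟨x.val.val + d, hlt⟩ : Fin (n + 1)) ∈ S :=
        hS x.val _ y.val x.property y.property (Fin.le_def.2 (by simp))
          (Fin.le_def.2 (by simp only; omega))
      refine (ih x ⟨_, hz⟩ rfl).trans (Adj.reachable ?_)
      rw [induce_adj, pathGraph_adj]
      exact Or.inl (by simp only; omega)
  intro x y
  rcases le_total x.val.val y.val.val with h | h
  · exact key (y.val.val - x.val.val) x y (by omega)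
  · exact (key (x.val.val - y.val.val) y x (by omega)).symm

/-- Positions as in `exists_position` give a model: `u` is sent to the interval from its own
position to the last position in its closed neighbourhood. -/
lemma exists_model_s11 {V : Type*} [Finite V] {G : SimpleGraph V} (pos : V → ℕ)
    (h₁ : ∀ u v w, pos u ≤ pos v → pos v ≤ pos w → G.Adj u w →
      (u ≠ v → G.Adj u v) ∧ (v ≠ w → G.Adj v w))
    (h₂ : ∀ u v, pos u = pos v → u ≠ v → G.Adj u v) :
    ∃ (β : Type) (_ : Fintype β) (T : SimpleGraph β) (P : V → Set β),
      T.IsTree ∧ InducesPath T (Set.univ : Set β) ∧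
      (∀ v : V, InducesPath T (P v)) ∧
      (∀ u v : V, u ≠ v → (G.Adj u v ↔ (P u ∩ P v).Nonempty)) ∧
      (∀ u v : V, u ≠ v → NonCrossing T (P u) (P v)) := by
  have hR : ∀ u, ∃ R, pos u ≤ R ∧ (∀ w, G.Adj u w → pos w ≤ R) ∧
      ∃ w, (w = u ∨ G.Adj u w) ∧ pos w = R := by
    intro u
    obtain ⟨w, hw, hmax⟩ := Set.exists_max_image {w | w = u ∨ G.Adj u w} pos
      (Set.toFinite _) ⟨u, Or.inl rfl⟩
    exact ⟨pos w, hmax u (Or.inl rfl), fun w hw => hmax w (Or.inr hw), w, hw, rfl⟩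
  choose R hR₁ hR₂ hR₃ using hR
  obtain ⟨M, hM⟩ : ∃ M, ∀ u, pos u ≤ M := by
    obtain ⟨M, hM⟩ := (Set.finite_range pos).bddAbove
    exact ⟨M, fun u => hM ⟨u, rfl⟩⟩
  have hRM : ∀ u, R u ≤ M := by
    intro u
    obtain ⟨w, -, hw⟩ := hR₃ u
    exact hw ▸ hM w
  -- both ends of the intervals are monotone in the position
  have hmono : ∀ u v, pos u ≤ pos v → R u ≤ R v := by
    intro u v huv
    rcases le_total (R u) (pos v) with h | h
    · exact h.trans (hR₁ v)
    · obtain ⟨w, hw, hwR⟩ := hR₃ u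
      rw [← hwR] at h ⊢
      rcases hw with rfl | hw
      · exact huv.trans (hR₁ v)
      · by_cases hvw : v = w
        · exact hvw ▸ hR₁ v
        · exact hR₂ v w ((h₁ u v w huv h hw).2 hvw)
  have hadj : ∀ u v, u ≠ v → pos u ≤ pos v → (G.Adj u v ↔ pos v ≤ R u) := by
    intro u v huv hp
    refine ⟨hR₂ u v, fun h => ?_⟩
    obtain ⟨w, hw, hwR⟩ := hR₃ u
    rw [← hwR] at h
    rcases hw with rfl | hw
    · exact h₂ w v (le_antisymm hp h) huv
    · exact (h₁ u v w hp h hw).1 huv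
  refine ⟨Fin (M + 1), inferInstance, pathGraph (M + 1),
    fun u => {i | pos u ≤ i.val ∧ i.val ≤ R u}, pathGraph_isTree M, ?_,
    fun v => inducesPath_interval (hR₁ v) (hRM v), ?_, ?_⟩
  · convert inducesPath_interval (Nat.zero_le M) le_rfl using 1
    ext i
    simp only [Set.mem_univ, Set.mem_ofPred_eq, true_iff]
    omega
  · have key : ∀ u v, u ≠ v → pos u ≤ pos v → (G.Adj u v ↔
        ({i : Fin (M + 1) | pos u ≤ i.val ∧ i.val ≤ R u} ∩
          {i | pos v ≤ i.val ∧ i.val ≤ R v}).Nonempty) := by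
      intro u v huv hp
      rw [hadj u v huv hp]
      constructor
      · intro h
        exact ⟨⟨pos v, by have := hM v; omega⟩, ⟨hp, h⟩, ⟨le_rfl, hR₁ v⟩⟩
      · rintro ⟨i, hi, hi'⟩
        exact hi'.1.trans hi.2
    intro u v huv
    rcases le_total (pos u) (pos v) with h | h
    · exact key u v huv h
    · rw [G.adj_comm, Set.inter_comm]; exact key v u huv.symm h
  · intro u v _
    have key : ∀ u v, ((pathGraph (M + 1)).induce
        ({i : Fin (M + 1) | pos u ≤ i.val ∧ i.val ≤ R u} \
          {i | pos v ≤ i.val ∧ i.val ≤ R v})).Preconnected := by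
      intro u v
      apply preconnected_of_interval
      have m1 := hmono u v
      have m2 := hmono v u
      intro i j k hi hk hij hjk
      simp only [Set.mem_sdiff, Set.mem_ofPred_eq, Fin.le_def] at *
      omega
    exact ⟨key u v, key v u⟩

end PathHost

/-! ### From a path model to the forbidden subgraphs -/

section Converse

lemma InducesPath.preconnected {β : Type*} {T : SimpleGraph β} {S : Set β}
    (h : InducesPath T S) : (T.induce S).Preconnected := by
  obtain ⟨n, f, -, rfl, hadj⟩ := h
  have key : ∀ i : Fin (n + 1),
      (T.induce (Set.range f)).Reachable ⟨f 0, 0, rfl⟩ ⟨f i, i, rfl⟩ := by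
    intro i
    induction i using Fin.induction with
    | zero => exact Reachable.refl _
    | succ i ih =>
      refine ih.trans (Adj.reachable ?_)
      rw [induce_adj, hadj]
      exact Or.inl (by simp)
  rintro ⟨_, i, rfl⟩ ⟨_, j, rfl⟩
  exact (key i).symm.trans (key j)

/-- Discrete intermediate value theorem: a connected set of nodes of a path meets every position
between two of its members. -/
lemma exists_mem_pos_eq {β : Type*} {T : SimpleGraph β} {pos : β → ℕ}
    (hpos : ∀ x y, T.Adj x y → pos x + 1 = pos y ∨ pos y + 1 = pos x) {S : Set β}
    (hS : (T.induce S).Preconnected) {a b : β} (ha : a ∈ S) (hb : b ∈ S) {t : ℕ}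
    (h₁ : pos a ≤ t) (h₂ : t ≤ pos b) : ∃ c ∈ S, pos c = t := by
  by_contra hcon
  push Not at hcon
  have key : ∀ y : S, (T.induce S).Reachable ⟨a, ha⟩ y → pos y < t := by
    intro y hy
    rw [reachable_iff_reflTransGen] at hy
    induction hy with
    | refl => exact lt_of_le_of_ne h₁ (hcon a ha)
    | @tail c d _ hcd ih =>
      have h1 := hpos c.val d.val hcd
      have h2 := hcon d d.property
      omega
  exact absurd (key ⟨b, hb⟩ (hS _ _)) (not_lt.2 h₂)

/-- `l` and `r` are the endpoints of a proper interval representation of `G`. -/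
structure ProperRep {V : Type*} (G : SimpleGraph V) (l r : V → ℕ) : Prop where
  le : ∀ v, l v ≤ r v
  adj : ∀ u v, u ≠ v → (G.Adj u v ↔ l u ≤ r v ∧ l v ≤ r u)
  proper : ∀ u v, l v ≤ l u ∨ r u ≤ r v

lemma exists_properRep {V β : Type*} [Finite β] {G : SimpleGraph V} {T : SimpleGraph β}
    {P : V → Set β} (hT : InducesPath T (Set.univ : Set β)) (hP : ∀ v : V, InducesPath T (P v))
    (hadj : ∀ u v : V, u ≠ v → (G.Adj u v ↔ (P u ∩ P v).Nonempty))
    (hnc : ∀ u v : V, u ≠ v → NonCrossing T (P u) (P v)) : ∃ l r, ProperRep G l r := by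
  obtain ⟨pos, hinj, hpos⟩ : ∃ pos : β → ℕ, Function.Injective pos ∧
      ∀ x y, T.Adj x y → pos x + 1 = pos y ∨ pos y + 1 = pos x := by
    obtain ⟨n, f, -, hf, hfadj⟩ := hT
    have hsurj : ∀ x, ∃ i, f i = x := fun x => by
      have : x ∈ Set.range f := hf ▸ Set.mem_univ x
      exact this
    choose g hg using hsurj
    refine ⟨fun x => (g x).val, fun x y h => ?_, fun x y h => ?_⟩
    · rw [← hg x, ← hg y, Fin.ext h]
    · rw [← hfadj, hg, hg]; exact h
  have hne : ∀ v, (P v).Nonempty := by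
    intro v
    obtain ⟨n, f, -, hf, -⟩ := hP v
    exact ⟨f 0, hf ▸ Set.mem_range_self 0⟩
  choose a ha hamin using fun v => Set.exists_min_image (P v) pos (Set.toFinite _) (hne v)
  choose b hb hbmax using fun v => Set.exists_max_image (P v) pos (Set.toFinite _) (hne v)
  refine ⟨fun v => pos (a v), fun v => pos (b v), fun v => hamin v _ (hb v), ?_, ?_⟩
  · intro u v huv
    rw [hadj u v huv]
    constructor
    · rintro ⟨x, hxu, hxv⟩
      exact ⟨(hamin u x hxu).trans (hbmax v x hxv), (hamin v x hxv).trans (hbmax u x hxu)⟩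
    · rintro ⟨h1, h2⟩
      obtain ⟨c, hc, hct⟩ := exists_mem_pos_eq hpos (hP u).preconnected (ha u) (hb u)
        (le_max_left (pos (a u)) (pos (a v))) (max_le (hamin u _ (hb u)) h2)
      obtain ⟨d, hd, hdt⟩ := exists_mem_pos_eq hpos (hP v).preconnected (ha v) (hb v)
        (le_max_right (pos (a u)) (pos (a v))) (max_le h1 (hamin v _ (hb v)))
      have : c = d := hinj (hct.trans hdt.symm)
      exact ⟨c, hc, this ▸ hd⟩
  · intro u v
    by_contra hcon
    push Not at hcon
    obtain ⟨h1, h2⟩ := hcon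
    have huv : u ≠ v := fun h => by rw [h] at h1; omega
    -- the two ends of `P u` lie in `P u \ P v`, on different sides of `P v`
    have hau : a u ∈ P u \ P v := ⟨ha u, fun h => by have := hamin v _ h; omega⟩
    have hbu : b u ∈ P u \ P v := ⟨hb u, fun h => by have := hbmax v _ h; omega⟩
    obtain ⟨c, hc, hct⟩ := exists_mem_pos_eq hpos (hnc u v huv).1 hau hbu h1.le
      ((hamin v _ (hb v)).trans h2.le)
    exact hc.2 (hinj hct ▸ ha v)

variable {V W : Type*} {G : SimpleGraph V} {l r : V → ℕ}

lemma ProperRep.comap {H : SimpleGraph W} (h : ProperRep G l r) (e : H ↪g G) :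
    ProperRep H (l ∘ e) (r ∘ e) where
  le v := h.le _
  adj u v huv := by
    rw [← e.map_adj_iff]
    exact h.adj _ _ (fun h' => huv (e.injective h'))
  proper u v := h.proper _ _

lemma ProperRep.clawFree (h : ProperRep G l r) : ClawFree G := by
  rintro ⟨e⟩
  have h' := h.comap e
  generalize l ∘ e = L at h'
  generalize r ∘ e = R at h'
  have a1 := h'.adj 0 1 (by decide)
  have a2 := h'.adj 0 2 (by decide)
  have a3 := h'.adj 0 3 (by decide)
  have a4 := h'.adj 1 2 (by decide)
  have a5 := h'.adj 1 3 (by decide)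
  have a6 := h'.adj 2 3 (by decide)
  have p1 := h'.proper 0 1
  have p2 := h'.proper 0 2
  have p3 := h'.proper 0 3
  simp [claw] at a1 a2 a3 a4 a5 a6
  omega

lemma ProperRep.no_threeSun (h : ProperRep G l r) : ¬ Nonempty (threeSun ↪g G) := by
  rintro ⟨e⟩
  have h' := h.comap e
  generalize l ∘ e = L at h'
  generalize r ∘ e = R at h'
  have a1 := h'.adj 3 0 (by decide)
  have a2 := h'.adj 3 1 (by decide)
  have a3 := h'.adj 3 2 (by decide)
  have a4 := h'.adj 4 0 (by decide)
  have a5 := h'.adj 4 1 (by decide)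
  have a6 := h'.adj 4 2 (by decide)
  have a7 := h'.adj 5 0 (by decide)
  have a8 := h'.adj 5 1 (by decide)
  have a9 := h'.adj 5 2 (by decide)
  have b1 := h'.adj 3 4 (by decide)
  have b2 := h'.adj 3 5 (by decide)
  have b3 := h'.adj 4 5 (by decide)
  have := h'.le
  have c3 := this 3
  have c4 := this 4
  have c5 := this 5
  simp [threeSun] at a1 a2 a3 a4 a5 a6 a7 a8 a9 b1 b2 b3
  omega

lemma ProperRep.no_net (h : ProperRep G l r) : ¬ Nonempty (net ↪g G) := by
  rintro ⟨e⟩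
  have h' := h.comap e
  generalize l ∘ e = L at h'
  generalize r ∘ e = R at h'
  have a1 := h'.adj 3 0 (by decide)
  have a2 := h'.adj 3 1 (by decide)
  have a3 := h'.adj 3 2 (by decide)
  have a4 := h'.adj 4 0 (by decide)
  have a5 := h'.adj 4 1 (by decide)
  have a6 := h'.adj 4 2 (by decide)
  have a7 := h'.adj 5 0 (by decide)
  have a8 := h'.adj 5 1 (by decide)
  have a9 := h'.adj 5 2 (by decide)
  have b1 := h'.adj 3 4 (by decide)
  have b2 := h'.adj 3 5 (by decide)
  have b3 := h'.adj 4 5 (by decide)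
  have b4 := h'.adj 0 1 (by decide)
  have b5 := h'.adj 0 2 (by decide)
  have b6 := h'.adj 1 2 (by decide)
  have c3 := h'.le 3
  have c4 := h'.le 4
  have c5 := h'.le 5
  simp [net] at a1 a2 a3 a4 a5 a6 a7 a8 a9 b1 b2 b3 b4 b5 b6
  omega

/-- The two neighbours, on an induced cycle, of the interval ending first both contain its right
end, so they are adjacent. -/
lemma ProperRep.chordal (h : ProperRep G l r) : Chordal G := by
  rintro n hn ⟨e⟩
  obtain ⟨m, rfl⟩ : ∃ m, n = m + 4 := ⟨n - 4, by omega⟩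
  have h' := h.comap e
  generalize l ∘ e = L at h'
  generalize r ∘ e = R at h'
  obtain ⟨i, -, hi⟩ := Set.exists_min_image (Set.univ : Set (Fin (m + 4))) R (Set.toFinite _)
    ⟨0, trivial⟩
  have n1 : (1 : Fin (m + 4)) ≠ 0 := by simp
  have n2 : (1 + 1 : Fin (m + 4)) ≠ 0 := by
    simp [Fin.ext_iff, Fin.val_add, Nat.mod_eq_of_lt]
  have n3 : (1 + 1 + 1 : Fin (m + 4)) ≠ 0 := by
    simp [Fin.ext_iff, Fin.val_add, Nat.mod_eq_of_lt]
  have d1 : i + 1 - (i - 1) = 1 + 1 := by abel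
  have d2 : i - 1 - (i + 1) = -(1 + 1) := by abel
  have hne : i + 1 ≠ i - 1 := fun h0 => n2 (by rw [← d1, h0, sub_self])
  have ha : (cycleGraph (m + 4)).Adj i (i + 1) := by
    rw [cycleGraph_adj]; exact Or.inr (by abel)
  have hb : (cycleGraph (m + 4)).Adj i (i - 1) := by
    rw [cycleGraph_adj]; exact Or.inl (by abel)
  have hc : ¬ (cycleGraph (m + 4)).Adj (i + 1) (i - 1) := by
    rw [cycleGraph_adj, d1, d2]
    rintro (h0 | h0)
    · exact n1 (add_eq_left.1 h0)
    · have h3 := add_neg_cancel (1 + 1 : Fin (m + 4))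
      rw [h0] at h3
      exact n3 h3
  rw [h'.adj _ _ ha.ne] at ha
  rw [h'.adj _ _ hb.ne] at hb
  rw [h'.adj _ _ hne] at hc
  have r1 := hi (i + 1) trivial
  have r2 := hi (i - 1) trivial
  omega

end Converse

/-- a finite connected graph is chordal, claw-free, 3-sun-free and net-free
iff it has an NC-path-tree model whose host tree is a path (i.e. it is proper interval). -/
theorem stmt_11 {V : Type*} [Fintype V] (G : SimpleGraph V) (hconn : G.Connected) :
    (Chordal G ∧ ClawFree G ∧ ¬ Nonempty (threeSun ↪g G) ∧ ¬ Nonempty (net ↪g G)) ↔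
    ∃ (β : Type) (_ : Fintype β) (T : SimpleGraph β) (P : V → Set β),
      T.IsTree ∧ InducesPath T (Set.univ : Set β) ∧
      (∀ v : V, InducesPath T (P v)) ∧
      (∀ u v : V, u ≠ v → (G.Adj u v ↔ (P u ∩ P v).Nonempty)) ∧
      (∀ u v : V, u ≠ v → NonCrossing T (P u) (P v)) := by
  constructor
  · rintro ⟨hch, hcl, hsun, hnet⟩
    obtain ⟨pos, h₁, h₂⟩ := exists_position hconn hch hcl hsun hnet
    exact exists_model_s11 pos h₁ h₂
  · rintro ⟨β, _, T, P, -, hT, hP, hadj, hnc⟩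
    obtain ⟨l, r, h⟩ := exists_properRep hT hP hadj hnc
    exact ⟨h.chordal, h.clawFree, h.no_threeSun, h.no_net⟩
end

section
/- Let G be a finite connected graph that is not a complete graph, with a clique NC-path-tree model ({P_v}, T). A subset S of V(G) is a connected dominating set of G if and only if for every edge xy of T, S contains at least one vertex of G_x ∩ G_y. -/
/-!
The proof rests on two properties: `T` is a tree whose nodes are all the maximal cliques of
`G`, and every `P v` is connected in `T`.

Delete an edge `xy` of `T`, leaving `T'`, in which `x` and `y` are not connected because `xy` is a
bridge. If `v` is not in both `C x` and `C y`, then `P v` does not use the edge `xy`, so it stays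
connected in `T'` (`reachable_deleteEdges`). Adjacent vertices of `G` lie in a common maximal
clique, so their paths meet. Hence if a connected set `S` misses `C x ∩ C y`, the paths of all its
vertices lie in one component of `T'`. If `S` also dominates a vertex of `C x \ C y` and one of
`C y \ C x` (both exist, since distinct maximal cliques are incomparable), that component contains
both `x` and `y`, a contradiction.

Conversely, let `S` meet `C x ∩ C y` for every edge `xy`. As `G` is not complete, `T` has at least
two nodes, so every node `x` has a neighbour and every `C x` meets `S`; thus `S` dominates. Walking
along `T` and choosing a vertex of `S` for each edge gives consecutive vertices in a common clique,
so `S` is connected (`reachable_induce`).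
-/

open SimpleGraph

/-- In a finite graph every clique lies in a clique of the model. -/
lemma exists_node_of_isClique {V β : Type*} [Finite V] {G : SimpleGraph V} {C : β → Set V}
    (hCsurj : ∀ s : Set V, IsMaxClique G s → ∃ x : β, C x = s)
    {s : Set V} (hs : G.IsClique s) : ∃ x : β, s ⊆ C x := by
  obtain ⟨t, hst, ht⟩ := (Set.toFinite {t : Set V | G.IsClique t}).exists_le_maximal hs
  obtain ⟨x, hx⟩ := hCsurj t ⟨ht.1, fun u hu htu => htu.antisymm (ht.2 hu htu)⟩
  exact ⟨x, hx ▸ hst⟩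

/-- A path of `T` that does not contain both ends of the edge `xy` stays connected when this
edge is deleted. -/
lemma reachable_deleteEdges {β : Type*} {T : SimpleGraph β} {A : Set β} (hA : InducesPath T A)
    {x y : β} (hxy : ¬ (x ∈ A ∧ y ∈ A)) {z w : β} (hz : z ∈ A) (hw : w ∈ A) :
    (T.deleteEdges {s(x, y)}).Reachable z w := by
  obtain ⟨n, f, -, rfl, hadj⟩ := hA
  have key : ∀ (k : ℕ) (hk : k < n + 1),
      (T.deleteEdges {s(x, y)}).Reachable (f 0) (f ⟨k, hk⟩) := by
    intro k
    induction k with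
    | zero => exact fun _ => Reachable.refl _
    | succ k ih =>
      intro hk
      refine (ih (by omega)).trans (Adj.reachable ?_)
      rw [deleteEdges_adj]
      refine ⟨(hadj _ _).2 (Or.inl rfl), fun h => hxy ?_⟩
      rcases Sym2.eq_iff.1 (Set.mem_singleton_iff.1 h) with ⟨rfl, rfl⟩ | ⟨rfl, rfl⟩ <;>
        exact ⟨⟨_, rfl⟩, ⟨_, rfl⟩⟩
  obtain ⟨i, rfl⟩ := hz
  obtain ⟨j, rfl⟩ := hw
  exact (key i i.2).symm.trans (key j j.2)

lemma reachable_induce_of_isClique {V : Type*} {G : SimpleGraph V} {S K : Set V}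
    (hK : G.IsClique K) (s t : S) (hs : s.1 ∈ K) (ht : t.1 ∈ K) : (G.induce S).Reachable s t := by
  by_cases h : s = t
  · exact h ▸ Reachable.refl _
  · exact Adj.reachable (hK hs ht (fun e => h (Subtype.ext e)))

/-- Two vertices of `S` lying in the cliques of two nodes joined by a walk of `T` are connected
inside `S`, by induction along the walk. -/
lemma reachable_induce {V β : Type*} {G : SimpleGraph V} {T : SimpleGraph β} {C : β → Set V}
    (hC : ∀ x, G.IsClique (C x)) {S : Set V}
    (hS : ∀ x y : β, T.Adj x y → ∃ v ∈ S, v ∈ C x ∧ v ∈ C y) {x y : β} (p : T.Walk x y) :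
    ∀ s t : S, s.1 ∈ C x → t.1 ∈ C y → (G.induce S).Reachable s t := by
  induction p with
  | nil => exact reachable_induce_of_isClique (hC _)
  | cons h p ih =>
    intro s t hs ht
    obtain ⟨v, hvS, hvx, hvy⟩ := hS _ _ h
    exact (reachable_induce_of_isClique (hC _) s ⟨v, hvS⟩ hs hvx).trans (ih ⟨v, hvS⟩ t hvy ht)

/-- in a clique NC-path-tree model of a connected non-complete graph,
a set is a connected dominating set iff it meets `G_x ∩ G_y` for every tree edge `xy`. -/
theorem stmt_12
    {V β : Type*} [Fintype V] (G : SimpleGraph V) (hconn : G.Connected)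
    (T : SimpleGraph β) (hT : T.IsTree)
    (C : β → Set V) (hCinj : Function.Injective C)
    (hCmax : ∀ x : β, IsMaxClique G (C x))
    (hCsurj : ∀ s : Set V, IsMaxClique G s → ∃ x : β, C x = s)
    (P : V → Set β) (hP : ∀ (v : V) (x : β), x ∈ P v ↔ v ∈ C x)
    (hpath : ∀ v : V, InducesPath T (P v))
    (hnc : ∀ u v : V, u ≠ v → NonCrossing T (P u) (P v))
    (hnc2 : G ≠ ⊤) :
    ∀ S : Set V,
      IsConnDom G S ↔ (∀ x y : β, T.Adj x y → ∃ v ∈ S, v ∈ C x ∧ v ∈ C y) := by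
  intro S
  have hedge : ∀ u v : V, u = v ∨ G.Adj u v → ∃ x, u ∈ C x ∧ v ∈ C x := by
    intro u v huv
    have hc : G.IsClique {u, v} := isClique_pair.2 fun hne => huv.resolve_left hne
    obtain ⟨x, hx⟩ := exists_node_of_isClique hCsurj hc
    exact ⟨x, hx (by simp), hx (by simp)⟩
  constructor
  · rintro ⟨hdom, hcon⟩ x y hxy
    by_contra! hno
    have hmiss : ∀ s ∈ S, ¬ (x ∈ P s ∧ y ∈ P s) := fun s hs h =>
      hno s hs ((hP s x).1 h.1) ((hP s y).1 h.2)
    have hwalk : ∀ s t : S, (G.induce S).Walk s t → ∀ z ∈ P s.1, ∀ w ∈ P t.1,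
        (T.deleteEdges {s(x, y)}).Reachable z w := by
      intro s t p
      induction p with
      | nil =>
        exact fun z hz w hw =>
          reachable_deleteEdges (hpath _) (hmiss _ (Subtype.prop _)) hz hw
      | @cons a b c h p ih =>
        intro z hz w hw
        obtain ⟨m, hma, hmb⟩ := hedge a.1 b.1 (Or.inr h)
        exact (reachable_deleteEdges (hpath a.1) (hmiss a.1 a.2) hz ((hP _ _).2 hma)).trans
          (ih m ((hP _ _).2 hmb) w hw)
    -- A vertex of `C a` outside `C b` is dominated by some `s ∈ S`, whose path therefore meets
    -- the component of `a` after deletion of the edge.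
    have hside : ∀ a b : β, a ≠ b → s(a, b) = s(x, y) → ∃ s : S, ∃ z ∈ P s.1,
        (T.deleteEdges {s(x, y)}).Reachable a z := by
      intro a b hab he
      obtain ⟨v, hva, hvb⟩ : ∃ v, v ∈ C a ∧ v ∉ C b := by
        by_contra! h
        exact hab (hCinj ((hCmax a).2 _ (hCmax b).1 h))
      obtain ⟨s, hs, hsv⟩ : ∃ s ∈ S, s = v ∨ G.Adj s v := by
        rcases hdom v with h | ⟨u, hu, huv⟩
        · exact ⟨v, h, Or.inl rfl⟩
        · exact ⟨u, hu, Or.inr huv⟩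
      obtain ⟨z, hzs, hzv⟩ := hedge s v hsv
      refine ⟨⟨s, hs⟩, z, (hP _ _).2 hzs, he ▸ ?_⟩
      exact reachable_deleteEdges (hpath v) (fun h => hvb ((hP _ _).1 h.2))
        ((hP _ _).2 hva) ((hP _ _).2 hzv)
    obtain ⟨s, z, hz, hxz⟩ := hside x y hxy.ne rfl
    obtain ⟨t, w, hw, hyw⟩ := hside y x hxy.ne' Sym2.eq_swap
    obtain ⟨p⟩ := hcon.preconnected s t
    have hbridge := isAcyclic_iff_forall_adj_isBridge.1 hT.isAcyclic hxy
    exact isBridge_iff.1 hbridge ((hxz.trans (hwalk s t p z hz w hw)).trans hyw.symm)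
  · intro hS
    have hnode : ∀ v : V, ∃ x, v ∈ C x := fun v => (hedge v v (Or.inl rfl)).imp fun _ h => h.1
    have hnb : ∀ x : β, ∃ y, T.Adj x y := by
      intro x
      by_contra! hx
      -- A node without neighbours is the only node, so its clique is all of `G`.
      have hall : ∀ y, y = x := by
        intro y
        obtain ⟨p⟩ := hT.connected.preconnected x y
        cases p with
        | nil => rfl
        | cons h _ => exact absurd h (hx _)
      have hmem : ∀ v, v ∈ C x := fun v => by
        obtain ⟨y, hy⟩ := hnode v
        exact hall y ▸ hy
      refine hnc2 (SimpleGraph.ext ?_)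
      ext u v
      exact ⟨fun h => h.ne, fun h => (hCmax x).1 (hmem u) (hmem v) h⟩
    refine ⟨fun v => ?_, ?_⟩
    · obtain ⟨x, hx⟩ := hnode v
      obtain ⟨y, hxy⟩ := hnb x
      obtain ⟨s, hs, hsx, -⟩ := hS x y hxy
      by_cases h : s = v
      · exact Or.inl (h ▸ hs)
      · exact Or.inr ⟨s, hs, (hCmax x).1 hsx hx h⟩
    · obtain ⟨x⟩ := hT.connected.nonempty
      obtain ⟨y, hxy⟩ := hnb x
      obtain ⟨v, hv, -⟩ := hS x y hxy
      refine (connected_iff _).2 ⟨fun s t => ?_, ⟨⟨v, hv⟩⟩⟩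
      obtain ⟨a, ha⟩ := hnode s.1
      obtain ⟨b, hb⟩ := hnode t.1
      obtain ⟨p⟩ := hT.connected.preconnected a b
      exact reachable_induce (fun x => (hCmax x).1) hS p s t ha hb
end
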